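/- (Lemma 3: energy estimate.) Under the assumptions of the context, there exists a constant C > 0, depending on n, T, M, δ₀, D, p₁, H and R but not on y, f and t, such that for every t ∈ [0,T]: (∫_D |∂_t y(x,t)|² dx)^{1/2} ≤ C ( (∫_D |f(x)|² dx)^{1/2} + d₋ ), where d₋ := ( Σ_{i=1,2} ∫₀^T ∫_{B_{ρ₁}} 1_{⟨H(G_i(x')), ν_i(x')⟩ ≤ 0} |∂_t y(G_i(x'), t)|² ω_i(x') dx' dt )^{1/2} is the L² norm of ∂_t y over the inflow part {x ∈ ∂D : ⟨H(x), ν(x)⟩ ≤ 0} × (0,T) of the lateral boundary. -/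

import Mathlib

noncomputable section

open MeasureTheory Metric Set
open scoped RealInnerProductSpace

abbrev Esp (n : ℕ) : Type := EuclideanSpace ℝ (Fin n)

/-- The point `(x', xₙ) ∈ ℝ^{d+1} = ℝ^d × ℝ`. -/
noncomputable def graphMk (d : ℕ) (x' : Esp d) (xn : ℝ) : Esp (d+1) :=
  (EuclideanSpace.equiv (Fin (d+1)) ℝ).symm
    (Fin.snoc (⇑(EuclideanSpace.equiv (Fin d) ℝ) x') xn)

/-- `H` is `(M, δ₀)`-admissible on the compact set `K`. -/
def IsAdmissible {n : ℕ} (M δ₀ : ℝ) (K : Set (Esp n)) (H : Esp n → Esp n) : Prop :=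
  ∃ U : Set (Esp n), IsOpen U ∧ Convex ℝ U ∧ K ⊆ U ∧ ContDiffOn ℝ 1 H U ∧
    (∀ x ∈ U, ‖H x‖ ≤ M) ∧ (∀ x ∈ U, ‖fderiv ℝ H x‖ ≤ M) ∧ (∀ x ∈ K, δ₀ < ‖H x‖)

/-- `ψ_H(x) = ⟨x, H(x)⟩`. -/
noncomputable def psiW {n : ℕ} (H : Esp n → Esp n) (x : Esp n) : ℝ := ⟪x, H x⟫

/-- The Carleman weight `φ_H(x,t) = -βt + ψ_H(x)`. -/
noncomputable def phiW {n : ℕ} (β : ℝ) (H : Esp n → Esp n) (x : Esp n) (t : ℝ) : ℝ :=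
  -(β * t) + psiW H x

/-- Outward unit normal `ν₁` of the upper graph `xₙ = ℓ(x')`. -/
noncomputable def nuUp (d : ℕ) (ℓ : Esp d → ℝ) (x' : Esp d) : Esp (d+1) :=
  (Real.sqrt (1 + ‖gradient ℓ x'‖ ^ 2))⁻¹ • graphMk d (-(gradient ℓ x')) 1

/-- Outward unit normal `ν₂` of the lower graph `xₙ = m(x')`. -/
noncomputable def nuDown (d : ℕ) (m : Esp d → ℝ) (x' : Esp d) : Esp (d+1) :=
  (Real.sqrt (1 + ‖gradient m x'‖ ^ 2))⁻¹ • graphMk d (gradient m x') (-1)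

/-- Area element `ω(x') = √(1 + |∇m(x')|²)` of the graph of `m`. -/
noncomputable def omegaW (d : ℕ) (m : Esp d → ℝ) (x' : Esp d) : ℝ :=
  Real.sqrt (1 + ‖gradient m x'‖ ^ 2)

/-- The graph domain `D = {(x', xₙ) : |x'| < ρ₁, ℓ(x') − ℓ̃(x') < xₙ < ℓ(x')}`. -/
def graphDomain (d : ℕ) (ρ₁ : ℝ) (ℓ ℓt : Esp d → ℝ) : Set (Esp (d+1)) :=
  {x | ∃ x' : Esp d, ∃ xn : ℝ, ‖x'‖ < ρ₁ ∧ ℓ x' - ℓt x' < xn ∧ xn < ℓ x' ∧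
    x = graphMk d x' xn}

open Filter Topology

theorem continuous_mul_of_tsupport_subset {X : Type*} [TopologicalSpace X] {A : Set X}
    (hA : IsOpen A) {k g : X → ℝ} (hk : Continuous k) (hs : tsupport k ⊆ A)
    (hg : ContinuousOn g A) : Continuous fun x => k x * g x := by
  refine continuous_of_tsupport fun x hx => ?_
  have hx' : x ∈ A := hs (tsupport_mul_subset_left hx)
  exact hk.continuousAt.mul (hg.continuousAt (hA.mem_nhds hx'))

theorem integrable_mul_of_tsupport_subset {n : ℕ} {A : Set (Esp n)}
    (hA : IsOpen A) {k g : Esp n → ℝ} (hk : Continuous k) (hc : HasCompactSupport k)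
    (hs : tsupport k ⊆ A) (hg : ContinuousOn g A) : Integrable fun x => k x * g x :=
  (continuous_mul_of_tsupport_subset hA hk hs hg).integrable_of_hasCompactSupport hc.mul_right

theorem contDiff_mul_of_tsupport_subset {n : ℕ} {A : Set (Esp n)}
    (hA : IsOpen A) {k g : Esp n → ℝ} (hk : ContDiff ℝ 1 k) (hs : tsupport k ⊆ A)
    (hg : ContDiffOn ℝ 1 g A) : ContDiff ℝ 1 fun x => k x * g x := by
  refine contDiff_iff_contDiffAt.2 fun x => ?_
  by_cases hx : x ∈ tsupport k
  · exact hk.contDiffAt.mul (hg.contDiffAt (hA.mem_nhds (hs hx)))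
  · refine (contDiffAt_const (c := (0 : ℝ))).congr_of_eventuallyEq ?_
    filter_upwards [notMem_tsupport_iff_eventuallyEq.1 hx] with z hz
    simp [hz]

/-- The divergence of a vector field on `ℝⁿ`. -/
def divergence {n : ℕ} (H : Esp n → Esp n) (x : Esp n) : ℝ :=
  ∑ i, fderiv ℝ H x (EuclideanSpace.single i 1) i

theorem abs_divergence_le {n : ℕ} {H : Esp n → Esp n} {x : Esp n} {M : ℝ}
    (h : ‖fderiv ℝ H x‖ ≤ M) : |divergence H x| ≤ n * M := by
  refine (Finset.abs_sum_le_sum_abs _ _).trans ?_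
  have : ∀ i ∈ (Finset.univ : Finset (Fin n)),
      |fderiv ℝ H x (EuclideanSpace.single i 1) i| ≤ M := fun i _ => by
    have h₁ := PiLp.norm_apply_le (fderiv ℝ H x (EuclideanSpace.single i 1)) i
    have h₂ := (fderiv ℝ H x).le_opNorm (EuclideanSpace.single i 1)
    simp only [PiLp.norm_single, norm_one, mul_one, Real.norm_eq_abs] at h₁ h₂
    exact h₁.trans (h₂.trans h)
  simpa using Finset.sum_le_sum this

theorem continuousOn_divergence {n : ℕ} {H : Esp n → Esp n} {U : Set (Esp n)} (hU : IsOpen U)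
    (hH : ContDiffOn ℝ 1 H U) : ContinuousOn (divergence H) U := by
  have h := hH.continuousOn_fderiv_of_isOpen hU le_rfl
  refine continuousOn_finsetSum _ fun i _ => ?_
  exact (EuclideanSpace.proj (𝕜 := ℝ) i).continuous.comp_continuousOn
    (h.clm_apply continuousOn_const)

theorem integral_fderiv_apply_eq_neg_divergence {n : ℕ} {U : Set (Esp n)} (hU : IsOpen U)
    {H : Esp n → Esp n} (hH : ContDiffOn ℝ 1 H U) {p : Esp n → ℝ} (hp : ContDiff ℝ 1 p)
    (hc : HasCompactSupport p) (hs : tsupport p ⊆ U) :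
    ∫ x, fderiv ℝ p x (H x) = - ∫ x, p x * divergence H x := by
  have hdp : ∀ i : Fin n, Continuous fun x => fderiv ℝ p x (EuclideanSpace.single i 1) :=
    fun i => (hp.continuous_fderiv one_ne_zero).clm_apply continuous_const
  have hdc : ∀ i : Fin n, HasCompactSupport fun x => fderiv ℝ p x (EuclideanSpace.single i 1) :=
    fun i => hc.fderiv_apply ℝ _
  have hds : ∀ i : Fin n, tsupport (fun x => fderiv ℝ p x (EuclideanSpace.single i 1)) ⊆ U :=
    fun i => (tsupport_fderiv_apply_subset ℝ _).trans hs
  have hHi : ∀ i : Fin n, ContinuousOn (fun x => H x i) U := fun i =>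
    (EuclideanSpace.proj (𝕜 := ℝ) i).continuous.comp_continuousOn hH.continuousOn
  have hHd : ∀ i : Fin n, ∀ x ∈ U, HasFDerivAt (fun x => H x i)
      ((EuclideanSpace.proj (𝕜 := ℝ) i).comp (fderiv ℝ H x)) x := fun i x hx =>
    (EuclideanSpace.proj (𝕜 := ℝ) i).hasFDerivAt.comp x
      ((hH.differentiableOn one_ne_zero).differentiableAt (hU.mem_nhds hx)).hasFDerivAt
  have hDH : ∀ i : Fin n, ContinuousOn
      (fun x => fderiv ℝ H x (EuclideanSpace.single i 1) i) U := fun i =>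
    (EuclideanSpace.proj (𝕜 := ℝ) i).continuous.comp_continuousOn
      ((hH.continuousOn_fderiv_of_isOpen hU le_rfl).clm_apply continuousOn_const)
  have hI1 := fun i => integrable_mul_of_tsupport_subset hU (hdp i) (hdc i) (hds i) (hHi i)
  have hI2 := fun i => integrable_mul_of_tsupport_subset hU hp.continuous hc hs (hDH i)
  have key : ∀ i : Fin n, ∫ x, fderiv ℝ p x (EuclideanSpace.single i 1) * H x i
      = - ∫ x, p x * fderiv ℝ H x (EuclideanSpace.single i 1) i := by
    intro i
    have e : ∀ x, p x * fderiv ℝ (fun x => H x i) x (EuclideanSpace.single i 1)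
        = p x * fderiv ℝ H x (EuclideanSpace.single i 1) i := fun x => by
      by_cases hx : x ∈ U
      · rw [(hHd i x hx).fderiv]; rfl
      · rw [image_eq_zero_of_notMem_tsupport fun h => hx (hs h)]; simp
    have := integral_mul_fderiv_eq_neg_fderiv_mul_of_integrable (μ := (volume : Measure (Esp n)))
      (f := p) (g := fun x => H x i) (v := EuclideanSpace.single i (1:ℝ)) (hI1 i)
      (by simpa only [e] using hI2 i)
      (integrable_mul_of_tsupport_subset hU hp.continuous hc hs (hHi i))
      (fun x _ => (hp.differentiable one_ne_zero) x)
      (fun x hx => (hHd i x (hs hx)).differentiableAt)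
    simp only [e] at this
    linarith
  have e1 : ∀ x, fderiv ℝ p x (H x) =
      ∑ i, fderiv ℝ p x (EuclideanSpace.single i 1) * H x i := by
    intro x
    conv_lhs => rw [← (EuclideanSpace.basisFun (Fin n) ℝ).sum_repr (H x)]
    simp [mul_comm]
  simp only [e1, divergence, Finset.mul_sum]
  rw [integral_finsetSum _ fun i _ => hI1 i, integral_finsetSum _ fun i _ => hI2 i,
    Finset.sum_congr rfl fun i _ => key i, Finset.sum_neg_distrib]

theorem continuousOn_integral_mul_of_tsupport_subset {n : ℕ} {D K : Set (Esp n)} {T : ℝ}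
    (hD : IsOpen D) (hK : IsCompact K) (hDK : D ⊆ K) {Q : Esp n → ℝ → ℝ}
    (hQ : ContinuousOn (fun q : Esp n × ℝ => Q q.1 q.2) (K ×ˢ Icc 0 T))
    {k : Esp n → ℝ} (hk : Continuous k) (hc : HasCompactSupport k) (hs : tsupport k ⊆ D) :
    ContinuousOn (fun t => ∫ x, k x * Q x t) (Icc 0 T) := by
  obtain ⟨C, hC⟩ := (hK.prod isCompact_Icc).exists_bound_of_continuousOn hQ
  have hkz : ∀ x, x ∉ D → k x = 0 := fun x hx =>
    image_eq_zero_of_notMem_tsupport fun h => hx (hs h)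
  refine continuousOn_of_dominated (bound := fun x => ‖k x‖ * C) (fun t ht => ?_)
    (fun t ht => ae_of_all _ fun x => ?_) ?_ (ae_of_all _ fun x => ?_)
  · refine (integrable_mul_of_tsupport_subset hD hk hc hs ?_).aestronglyMeasurable
    exact hQ.comp (by fun_prop : ContinuousOn (fun x : Esp n => (x, t)) D)
      fun x hx => ⟨hDK hx, ht⟩
  · by_cases hx : x ∈ D
    · rw [norm_mul]
      exact mul_le_mul_of_nonneg_left (hC (x, t) ⟨hDK hx, ht⟩) (norm_nonneg _)
    · simp [hkz x hx]
  · exact (hk.integrable_of_hasCompactSupport hc).norm.mul_const C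
  · by_cases hx : x ∈ D
    · exact continuousOn_const.mul (hQ.comp
        (by fun_prop : ContinuousOn (fun t : ℝ => (x, t)) (Icc 0 T)) fun t ht => ⟨hDK hx, ht⟩)
    · simpa [hkz x hx] using continuousOn_const

theorem continuous_fderiv_apply_of_tsupport_subset {n : ℕ} {U : Set (Esp n)} (hU : IsOpen U)
    {H : Esp n → Esp n} (hH : ContinuousOn H U) {p : Esp n → ℝ} (hp : ContDiff ℝ 1 p)
    (hs : tsupport p ⊆ U) : Continuous fun x => fderiv ℝ p x (H x) := by
  refine continuous_iff_continuousAt.2 fun x => ?_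
  by_cases hx : x ∈ tsupport p
  · exact (hp.continuous_fderiv one_ne_zero).continuousAt.clm_apply
      (hH.continuousAt (hU.mem_nhds (hs hx)))
  · refine (continuousAt_const (y := (0 : ℝ))).congr ?_
    have h := notMem_tsupport_iff_eventuallyEq.1 fun h => hx (tsupport_fderiv_subset ℝ h)
    filter_upwards [h] with z hz
    simp [hz]

theorem tsupport_fderiv_apply_field_subset {n : ℕ} {H : Esp n → Esp n} {p : Esp n → ℝ} :
    tsupport (fun x => fderiv ℝ p x (H x)) ⊆ tsupport p := by
  refine (closure_mono fun x hx => ?_ : _ ⊆ tsupport (fderiv ℝ p)).trans (tsupport_fderiv_subset ℝ)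
  intro h
  exact hx (by simp [h])

theorem hasDerivAt_integral_mul_of_tsupport_subset {n : ℕ} {D : Set (Esp n)} {T : ℝ}
    (hD : IsOpen D) {Q : Esp n → ℝ → ℝ}
    (hQ : ContDiffOn ℝ 1 (fun q : Esp n × ℝ => Q q.1 q.2) (D ×ˢ Ioo 0 T))
    {k : Esp n → ℝ} (hk : Continuous k) (hc : HasCompactSupport k) (hs : tsupport k ⊆ D)
    {t : ℝ} (ht : t ∈ Ioo 0 T) :
    Integrable (fun x => k x * fderiv ℝ (fun q : Esp n × ℝ => Q q.1 q.2) (x, t) (0, 1)) ∧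
    HasDerivAt (fun t => ∫ x, k x * Q x t)
      (∫ x, k x * fderiv ℝ (fun q : Esp n × ℝ => Q q.1 q.2) (x, t) (0, 1)) t := by
  have hO : IsOpen (D ×ˢ Ioo (0:ℝ) T) := hD.prod isOpen_Ioo
  have hQ' := (hQ.continuousOn_fderiv_of_isOpen hO le_rfl).clm_apply
    (continuousOn_const (c := ((0 : Esp n), (1 : ℝ))))
  obtain ⟨δ, hδ, hball⟩ := nhds_basis_closedBall.mem_iff.1 (isOpen_Ioo.mem_nhds ht)
  obtain ⟨C, hC⟩ := (hc.isCompact.prod (isCompact_closedBall t δ)).exists_bound_of_continuousOn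
    (hQ'.mono (prod_mono hs hball))
  have hkz : ∀ x, x ∉ tsupport k → k x = 0 := fun x hx => image_eq_zero_of_notMem_tsupport hx
  have hslice : ∀ s ∈ Ioo 0 T, ContinuousOn (fun x : Esp n => (x, s)) D ∧
      MapsTo (fun x : Esp n => (x, s)) D (D ×ˢ Ioo 0 T) :=
    fun s hs' => ⟨by fun_prop, fun x hx => ⟨hx, hs'⟩⟩
  have hInt : ∀ s ∈ Ioo 0 T, Integrable fun x => k x * Q x s := fun s hs' =>
    integrable_mul_of_tsupport_subset hD hk hc hs
      (hQ.continuousOn.comp (hslice s hs').1 (hslice s hs').2)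
  refine hasDerivAt_integral_of_dominated_loc_of_deriv_le (bound := fun x => ‖k x‖ * C)
    (F' := fun t x => k x * fderiv ℝ (fun q : Esp n × ℝ => Q q.1 q.2) (x, t) (0, 1))
    (closedBall_mem_nhds t hδ) ?_ (hInt t ht) ?_ ?_ ?_ ?_
  · filter_upwards [isOpen_Ioo.mem_nhds ht] with s hs' using (hInt s hs').aestronglyMeasurable
  · exact (integrable_mul_of_tsupport_subset hD hk hc hs
      (hQ'.comp (hslice t ht).1 (hslice t ht).2)).aestronglyMeasurable
  · refine ae_of_all _ fun x s hs' => ?_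
    by_cases hx : x ∈ tsupport k
    · rw [norm_mul]
      exact mul_le_mul_of_nonneg_left (hC (x, s) ⟨hx, hs'⟩) (norm_nonneg _)
    · simp [hkz x hx]
  · exact (hk.integrable_of_hasCompactSupport hc).norm.mul_const C
  · refine ae_of_all _ fun x s hs' => ?_
    by_cases hx : x ∈ tsupport k
    · have h1 : HasFDerivAt (fun q : Esp n × ℝ => Q q.1 q.2) _ (x, s) :=
        ((hQ.differentiableOn one_ne_zero).differentiableAt
          (hO.mem_nhds ⟨hs hx, hball hs'⟩)).hasFDerivAt
      have h2 : HasDerivAt (fun s : ℝ => (x, s)) ((0 : Esp n), (1 : ℝ)) s :=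
        (hasDerivAt_const s x).prodMk (hasDerivAt_id s)
      exact (h1.comp_hasDerivAt s h2).const_mul (k x)
    · simpa [hkz x hx] using hasDerivAt_const s (0:ℝ)

theorem integral_mul_le_of_transport_inequality {n : ℕ} {D K U : Set (Esp n)} {T M t₀ : ℝ}
    (hD : IsOpen D) (hK : IsCompact K) (hDK : D ⊆ K) (hU : IsOpen U) (hKU : K ⊆ U)
    {H : Esp n → Esp n} (hH : ContDiffOn ℝ 1 H U) (hDH : ∀ x ∈ U, ‖fderiv ℝ H x‖ ≤ M)
    {Q : Esp n → ℝ → ℝ} (hQc : ContinuousOn (fun q : Esp n × ℝ => Q q.1 q.2) (K ×ˢ Icc 0 T))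
    (hQd : ContDiffOn ℝ 1 (fun q : Esp n × ℝ => Q q.1 q.2) (D ×ˢ Ioo 0 T))
    (hQ0 : ∀ x ∈ D, ∀ t ∈ Icc 0 T, 0 ≤ Q x t)
    {F : Esp n → ℝ} (hF : ContinuousOn F K)
    (hineq : ∀ x ∈ D, ∀ t ∈ Ioo 0 T,
      fderiv ℝ (fun q : Esp n × ℝ => Q q.1 q.2) (x, t) (H x, 1) ≤ F x - n * M * Q x t)
    {χ : Esp n → ℝ} (hχ : ContDiff ℝ 1 χ) (hχc : HasCompactSupport χ) (hχs : tsupport χ ⊆ D)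
    (hχ0 : ∀ x, 0 ≤ χ x) (ht₀ : t₀ ∈ Icc 0 T) :
    ∫ x, χ x * Q x t₀ ≤ (∫ x, χ x * Q x 0) + t₀ * (∫ x, χ x * F x)
      + ∫ t in (0:ℝ)..t₀, ∫ x, fderiv ℝ χ x (H x) * Q x t := by
  have hχU : tsupport χ ⊆ U := hχs.trans (hDK.trans hKU)
  have hDχ : Continuous fun x => fderiv ℝ χ x (H x) :=
    continuous_fderiv_apply_of_tsupport_subset hU hH.continuousOn hχ hχU
  have hDχs : tsupport (fun x => fderiv ℝ χ x (H x)) ⊆ D :=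
    tsupport_fderiv_apply_field_subset.trans hχs
  have hDχc : HasCompactSupport fun x => fderiv ℝ χ x (H x) :=
    hχc.mono' (subset_closure.trans tsupport_fderiv_apply_field_subset)
  have hcont1 := continuousOn_integral_mul_of_tsupport_subset hD hK hDK hQc hχ.continuous hχc hχs
  have hcont2 := continuousOn_integral_mul_of_tsupport_subset hD hK hDK hQc hDχ hDχc hDχs
  have hsub : Icc 0 t₀ ⊆ Icc 0 T := Icc_subset_Icc_right ht₀.2
  have hφ : ContinuousOn (fun t => (∫ x, χ x * F x) + ∫ x, fderiv ℝ χ x (H x) * Q x t)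
      (Icc 0 t₀) := continuousOn_const.add (hcont2.mono hsub)
  have key := intervalIntegral.sub_le_integral_of_hasDeriv_right_of_le ht₀.1 (hcont1.mono hsub)
    (fun t ht => ((hasDerivAt_integral_mul_of_tsupport_subset hD hQd hχ.continuous hχc hχs
      ⟨ht.1, ht.2.trans_le ht₀.2⟩).2).hasDerivWithinAt)
    (hφ.integrableOn_compact isCompact_Icc) ?_
  · have hi : IntervalIntegrable (fun t => ∫ x, fderiv ℝ χ x (H x) * Q x t) volume 0 t₀ :=
      (hcont2.mono (by rwa [uIcc_of_le ht₀.1])).intervalIntegrable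
    rw [intervalIntegral.integral_add intervalIntegrable_const hi] at key
    simp only [intervalIntegral.integral_const, sub_zero, smul_eq_mul] at key
    linarith
  · intro t ht
    have htT : t ∈ Ioo 0 T := ⟨ht.1, ht.2.trans_le ht₀.2⟩
    have hmaps : MapsTo (fun x : Esp n => (x, t)) D (D ×ˢ Ioo 0 T) := fun x hx => ⟨hx, htT⟩
    have hqd : ContDiffOn ℝ 1 (fun x => Q x t) D :=
      hQd.comp ((contDiff_id.prodMk contDiff_const).contDiffOn) hmaps
    have hp : ContDiff ℝ 1 fun x => χ x * Q x t :=
      contDiff_mul_of_tsupport_subset hD hχ hχs hqd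
    have hpc : HasCompactSupport fun x => χ x * Q x t := hχc.mul_right
    have hps : tsupport (fun x => χ x * Q x t) ⊆ U := tsupport_mul_subset_left.trans hχU
    have hdiv := integral_fderiv_apply_eq_neg_divergence hU hH hp hpc hps
    have i1 := (hasDerivAt_integral_mul_of_tsupport_subset hD hQd hχ.continuous hχc hχs htT).1
    have i2 : Integrable fun x => χ x * F x :=
      integrable_mul_of_tsupport_subset hD hχ.continuous hχc hχs (hF.mono hDK)
    have i3 : Integrable fun x => fderiv ℝ χ x (H x) * Q x t :=
      integrable_mul_of_tsupport_subset hD hDχ hDχc hDχs hqd.continuousOn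
    have i4 : Integrable fun x => fderiv ℝ (fun x => χ x * Q x t) x (H x) :=
      (continuous_fderiv_apply_of_tsupport_subset hU hH.continuousOn hp
        hps).integrable_of_hasCompactSupport
        (hpc.mono' (subset_closure.trans tsupport_fderiv_apply_field_subset))
    have i5 : Integrable fun x => χ x * Q x t * divergence H x :=
      integrable_mul_of_tsupport_subset hU hp.continuous hpc hps (continuousOn_divergence hU hH)
    have i23 : Integrable fun x => χ x * F x + fderiv ℝ χ x (H x) * Q x t := i2.add i3
    have i45 : Integrable fun x => fderiv ℝ (fun x => χ x * Q x t) x (H x)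
        + χ x * Q x t * divergence H x := i4.add i5
    have hle : ∫ x, χ x * fderiv ℝ (fun q : Esp n × ℝ => Q q.1 q.2) (x, t) (0, 1)
        ≤ ∫ x, ((χ x * F x + fderiv ℝ χ x (H x) * Q x t)
          - (fderiv ℝ (fun x => χ x * Q x t) x (H x) + χ x * Q x t * divergence H x)) := by
      refine integral_mono i1 (i23.sub i45) fun x => ?_
      by_cases hx : x ∈ tsupport χ
      · have hxD := hχs hx
        have hQx : HasFDerivAt (fun q : Esp n × ℝ => Q q.1 q.2) _ (x, t) :=
          ((hQd.differentiableOn one_ne_zero).differentiableAt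
            ((hD.prod isOpen_Ioo).mem_nhds ⟨hxD, htT⟩)).hasFDerivAt
        have hqx : HasFDerivAt (fun x => Q x t) _ x :=
          HasFDerivAt.comp x (f := fun x => (x, t)) hQx
            ((hasFDerivAt_id x).prodMk (hasFDerivAt_const t x))
        have hpx := ((hχ.differentiable one_ne_zero x).hasFDerivAt.mul hqx).fderiv
        have hd := abs_le.1 (abs_divergence_le (hDH x (hχU hx)))
        have h1 := hineq x hxD t htT
        have hsplit : fderiv ℝ (fun q : Esp n × ℝ => Q q.1 q.2) (x, t) (H x, 1)
            = fderiv ℝ (fun q : Esp n × ℝ => Q q.1 q.2) (x, t) (H x, 0)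
              + fderiv ℝ (fun q : Esp n × ℝ => Q q.1 q.2) (x, t) (0, 1) := by
          rw [← map_add]; simp
        have hpx' : fderiv ℝ (fun x => χ x * Q x t) x (H x)
            = χ x * fderiv ℝ (fun q : Esp n × ℝ => Q q.1 q.2) (x, t) (H x, 0)
              + Q x t * fderiv ℝ χ x (H x) := by
          refine (congrArg (fun A => A (H x)) hpx).trans ?_
          simp
        have h2 := mul_le_mul_of_nonneg_left h1 (hχ0 x)
        have h3 := mul_le_mul_of_nonneg_left hd.2
          (mul_nonneg (hχ0 x) (hQ0 x hxD t (Ioo_subset_Icc_self htT)))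
        simp only [hpx']
        rw [hsplit] at h2
        linarith
      · have hz : χ x = 0 := image_eq_zero_of_notMem_tsupport hx
        have hz1 : fderiv ℝ χ x (H x) = 0 := image_eq_zero_of_notMem_tsupport
          (f := fun x => fderiv ℝ χ x (H x)) fun h => hx (tsupport_fderiv_apply_field_subset h)
        have hz2 : fderiv ℝ (fun x => χ x * Q x t) x (H x) = 0 :=
          image_eq_zero_of_notMem_tsupport (f := fun x => fderiv ℝ (fun x => χ x * Q x t) x (H x))
            fun h => hx (tsupport_mul_subset_left (tsupport_fderiv_apply_field_subset h))
        simp [hz, hz1, hz2]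
    rw [integral_sub i23 i45, integral_add i2 i3, integral_add i4 i5, hdiv] at hle
    linarith

/-- A smooth step from `0` on `(-∞, 1]` to `1` on `[2, ∞)`. -/
def smoothStep (s : ℝ) : ℝ := Real.smoothTransition (s - 1)

theorem contDiff_smoothStep : ContDiff ℝ 1 smoothStep :=
  (Real.smoothTransition.contDiff (n := 1)).comp (contDiff_id.sub contDiff_const)

theorem smoothStep_of_le_one {s : ℝ} (h : s ≤ 1) : smoothStep s = 0 :=
  Real.smoothTransition.zero_of_nonpos (by linarith)

theorem smoothStep_of_two_le {s : ℝ} (h : 2 ≤ s) : smoothStep s = 1 :=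
  Real.smoothTransition.one_of_one_le (by linarith)

theorem smoothStep_nonneg (s : ℝ) : 0 ≤ smoothStep s := Real.smoothTransition.nonneg _

theorem smoothStep_le_one (s : ℝ) : smoothStep s ≤ 1 := Real.smoothTransition.le_one _

theorem continuous_deriv_smoothStep : Continuous (deriv smoothStep) :=
  contDiff_smoothStep.continuous_deriv le_rfl

theorem hasDerivAt_smoothStep (s : ℝ) : HasDerivAt smoothStep (deriv smoothStep s) s :=
  (contDiff_smoothStep.differentiable one_ne_zero s).hasDerivAt

theorem deriv_smoothStep_eq_zero {s : ℝ} (h : s ∉ Icc (1:ℝ) 2) : deriv smoothStep s = 0 := by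
  rw [mem_Icc, not_and_or, not_le, not_le] at h
  rcases h with h | h
  · have : smoothStep =ᶠ[𝓝 s] fun _ => 0 := by
      filter_upwards [Iio_mem_nhds h] with z hz using smoothStep_of_le_one (le_of_lt hz)
    rw [this.deriv_eq, deriv_const]
  · have : smoothStep =ᶠ[𝓝 s] fun _ => 1 := by
      filter_upwards [Ioi_mem_nhds h] with z hz using smoothStep_of_two_le (le_of_lt hz)
    rw [this.deriv_eq, deriv_const]

theorem integral_deriv_smoothStep : ∫ s in Icc (1:ℝ) 2, deriv smoothStep s = 1 := by
  rw [integral_Icc_eq_integral_Ioc, ← intervalIntegral.integral_of_le one_le_two,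
    intervalIntegral.integral_deriv_eq_sub' smoothStep rfl
      (fun s _ => contDiff_smoothStep.differentiable one_ne_zero s)
      continuous_deriv_smoothStep.continuousOn,
    smoothStep_of_le_one le_rfl, smoothStep_of_two_le le_rfl, sub_zero]

theorem exists_deriv_smoothStep_bound : ∃ B : ℝ, 0 ≤ B ∧ ∀ s, |deriv smoothStep s| ≤ B := by
  obtain ⟨B, hB⟩ := (isCompact_Icc (a := (1:ℝ)) (b := 2)).exists_bound_of_continuousOn
    continuous_deriv_smoothStep.continuousOn
  refine ⟨max B 0, le_max_right _ _, fun s => ?_⟩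
  by_cases hs : s ∈ Icc (1:ℝ) 2
  · exact (hB s hs).trans (le_max_left _ _)
  · simp [deriv_smoothStep_eq_zero hs]

/-- Kernel concentrating at the upper end `b` of `[a, b]` as `ε → 0`. -/
def upperKernel (ε a b s : ℝ) : ℝ :=
  ε⁻¹ * deriv smoothStep ((b - s) / ε) * smoothStep ((s - a) / ε)

/-- Kernel concentrating at the lower end `a` of `[a, b]` as `ε → 0`. -/
def lowerKernel (ε a b s : ℝ) : ℝ :=
  ε⁻¹ * deriv smoothStep ((s - a) / ε) * smoothStep ((b - s) / ε)

theorem integral_upperKernel_mul {ε : ℝ} (hε : 0 < ε) (a b : ℝ) (g : ℝ → ℝ) :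
    ∫ s, upperKernel ε a b s * g s =
      ∫ σ in Icc (1:ℝ) 2, deriv smoothStep σ * smoothStep ((b - a) / ε - σ) * g (b - ε * σ) := by
  rw [setIntegral_eq_integral_of_forall_compl_eq_zero
    (fun σ hσ => by rw [deriv_smoothStep_eq_zero hσ]; simp)]
  rw [← integral_sub_left_eq_self (fun s => upperKernel ε a b s * g s) volume b]
  have h := Measure.integral_comp_mul_left (fun s => upperKernel ε a b (b - s) * g (b - s)) ε
  rw [abs_of_pos (inv_pos.2 hε), smul_eq_mul] at h
  have h' : ∫ s, upperKernel ε a b (b - s) * g (b - s)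
      = ε * ∫ σ, upperKernel ε a b (b - ε * σ) * g (b - ε * σ) := by
    rw [h]; field_simp
  rw [h', ← integral_const_mul]
  congr 1
  ext σ
  have e1 : (b - (b - ε * σ)) / ε = σ := by field_simp; ring
  have e2 : (b - ε * σ - a) / ε = (b - a) / ε - σ := by field_simp; ring
  simp only [upperKernel, e1, e2]
  field_simp

theorem upperKernel_arg_mem {ε a b σ : ℝ} (hε : 0 < ε) (hσ : σ ∈ Icc (1:ℝ) 2)
    (h : smoothStep ((b - a) / ε - σ) ≠ 0) : b - ε * σ ∈ Icc a b := by
  have h1 : 1 < (b - a) / ε - σ := by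
    by_contra! hle
    exact h (smoothStep_of_le_one hle)
  have h2 : ε * σ < b - a := by
    have : σ < (b - a) / ε := by linarith
    rwa [lt_div_iff₀ hε, mul_comm] at this
  have : 0 < ε * σ := mul_pos hε (by linarith [hσ.1])
  constructor <;> linarith

theorem abs_integral_upperKernel_mul_le {ε a b B C : ℝ} (hε : 0 < ε) {g : ℝ → ℝ}
    (hB : ∀ s, |deriv smoothStep s| ≤ B) (hC0 : 0 ≤ C) (hC : ∀ s ∈ Icc a b, |g s| ≤ C) :
    |∫ s, upperKernel ε a b s * g s| ≤ B * C := by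
  have hB0 : 0 ≤ B := (abs_nonneg _).trans (hB 0)
  rw [integral_upperKernel_mul hε]
  have := norm_setIntegral_le_of_norm_le_const (μ := volume) (s := Icc (1:ℝ) 2) (C := B * C)
    (f := fun σ => deriv smoothStep σ * smoothStep ((b - a) / ε - σ) * g (b - ε * σ))
    (by simp) (fun σ hσ => ?_)
  · simpa [Measure.real, show (2:ℝ) - 1 = 1 by norm_num] using this
  · by_cases h : smoothStep ((b - a) / ε - σ) = 0
    · simp [h]; positivity
    · have h1 := hC _ (upperKernel_arg_mem hε hσ h)
      rw [norm_mul, norm_mul, Real.norm_eq_abs, Real.norm_eq_abs, Real.norm_eq_abs,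
        abs_of_nonneg (smoothStep_nonneg _)]
      refine mul_le_mul ?_ h1 (abs_nonneg _) hB0
      exact (mul_le_of_le_one_right (abs_nonneg _) (smoothStep_le_one _)).trans (hB σ)

theorem tendsto_integral_upperKernel_mul {a b : ℝ} (hab : a < b) {g : ℝ → ℝ}
    (hg : ContinuousOn g (Icc a b)) :
    Tendsto (fun ε => ∫ s, upperKernel ε a b s * g s) (𝓝[>] 0) (𝓝 (g b)) := by
  obtain ⟨B, hB0, hB⟩ := exists_deriv_smoothStep_bound
  obtain ⟨C, hC⟩ := isCompact_Icc.exists_bound_of_continuousOn hg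
  have hC0 : 0 ≤ C := (norm_nonneg _).trans (hC b ⟨hab.le, le_rfl⟩)
  have hev : ∀ᶠ ε : ℝ in 𝓝[>] 0, 0 < ε ∧ 4 * ε < b - a := by
    filter_upwards [Ioo_mem_nhdsGT (show (0:ℝ) < (b - a) / 4 by linarith)] with ε hε
    exact ⟨hε.1, by linarith [hε.2]⟩
  have hone : ∀ {ε σ : ℝ}, 0 < ε → 4 * ε < b - a → σ ∈ Icc (1:ℝ) 2 →
      smoothStep ((b - a) / ε - σ) = 1 := fun {ε σ} h0 h4 hσ => by
    apply smoothStep_of_two_le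
    have : 4 < (b - a) / ε := by rwa [lt_div_iff₀ h0]
    linarith [hσ.2]
  have hmem : ∀ {ε σ : ℝ}, 0 < ε → 4 * ε < b - a → σ ∈ Icc (1:ℝ) 2 → b - ε * σ ∈ Icc a b :=
    fun h0 h4 hσ => upperKernel_arg_mem h0 hσ (by rw [hone h0 h4 hσ]; exact one_ne_zero)
  have hlim : Tendsto (fun ε => ∫ σ in Icc (1:ℝ) 2, deriv smoothStep σ * g (b - ε * σ)) (𝓝[>] 0)
      (𝓝 (∫ σ in Icc (1:ℝ) 2, deriv smoothStep σ * g b)) := by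
    refine tendsto_integral_filter_of_dominated_convergence (fun _ => B * C) ?_ ?_ ?_ ?_
    · filter_upwards [hev] with ε hε
      refine ContinuousOn.aestronglyMeasurable ?_ measurableSet_Icc
      exact continuous_deriv_smoothStep.continuousOn.mul
        (hg.comp (by fun_prop) fun σ hσ => hmem hε.1 hε.2 hσ)
    · filter_upwards [hev] with ε hε
      refine (ae_restrict_iff' measurableSet_Icc).2 (ae_of_all _ fun σ hσ => ?_)
      rw [norm_mul]
      exact mul_le_mul (hB σ) (hC _ (hmem hε.1 hε.2 hσ)) (norm_nonneg _) hB0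
    · exact integrable_const _
    · refine (ae_restrict_iff' measurableSet_Icc).2 (ae_of_all _ fun σ hσ => ?_)
      refine tendsto_const_nhds.mul ?_
      have hc : Tendsto (fun ε : ℝ => b - ε * σ) (𝓝[>] 0) (𝓝[Icc a b] b) := by
        refine tendsto_nhdsWithin_iff.2 ⟨?_, ?_⟩
        · have : Tendsto (fun ε : ℝ => b - ε * σ) (𝓝 0) (𝓝 (b - 0 * σ)) := by
            apply Continuous.tendsto; fun_prop
          rw [zero_mul, sub_zero] at this
          exact this.mono_left nhdsWithin_le_nhds
        · filter_upwards [hev] with ε hε using hmem hε.1 hε.2 hσ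
      exact (hg b ⟨hab.le, le_rfl⟩).tendsto.comp hc
  rw [integral_mul_const, integral_deriv_smoothStep, one_mul] at hlim
  refine hlim.congr' ?_
  filter_upwards [hev] with ε hε
  rw [integral_upperKernel_mul hε.1]
  refine setIntegral_congr_fun measurableSet_Icc fun σ hσ => ?_
  simp only [hone hε.1 hε.2 hσ, mul_one]

theorem integral_lowerKernel_mul (ε a b : ℝ) (g : ℝ → ℝ) :
    ∫ s, lowerKernel ε a b s * g s = ∫ s, upperKernel ε (-b) (-a) s * g (-s) := by
  rw [← integral_neg_eq_self (fun s => lowerKernel ε a b s * g s)]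
  congr 1
  ext s
  simp only [upperKernel, lowerKernel]
  rw [show -a - s = -s - a by ring, show s - -b = b - -s by ring]

theorem abs_integral_lowerKernel_mul_le {ε a b B C : ℝ} (hε : 0 < ε) {g : ℝ → ℝ}
    (hB : ∀ s, |deriv smoothStep s| ≤ B) (hC0 : 0 ≤ C) (hC : ∀ s ∈ Icc a b, |g s| ≤ C) :
    |∫ s, lowerKernel ε a b s * g s| ≤ B * C := by
  rw [integral_lowerKernel_mul]
  exact abs_integral_upperKernel_mul_le hε hB hC0 fun s hs =>
    hC _ ⟨by linarith [hs.2], by linarith [hs.1]⟩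

theorem tendsto_integral_lowerKernel_mul {a b : ℝ} (hab : a < b) {g : ℝ → ℝ}
    (hg : ContinuousOn g (Icc a b)) :
    Tendsto (fun ε => ∫ s, lowerKernel ε a b s * g s) (𝓝[>] 0) (𝓝 (g a)) := by
  simp only [integral_lowerKernel_mul]
  have h := tendsto_integral_upperKernel_mul (neg_lt_neg hab) (g := fun s => g (-s))
    (hg.comp (by fun_prop) fun s hs => ⟨by linarith [hs.2], by linarith [hs.1]⟩)
  simpa using h

/-- The projection of a point of `ℝ^d × ℝ` to its first component. -/
def headL (d : ℕ) : Esp (d+1) →L[ℝ] Esp d :=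
  (EuclideanSpace.equiv (Fin d) ℝ).symm.toContinuousLinearMap.comp
    (ContinuousLinearMap.pi fun i => EuclideanSpace.proj (Fin.castSucc i))

/-- The projection of a point of `ℝ^d × ℝ` to its last coordinate. -/
def lastL (d : ℕ) : Esp (d+1) →L[ℝ] ℝ := EuclideanSpace.proj (Fin.last d)

theorem headL_apply (d : ℕ) (x : Esp (d+1)) (i : Fin d) : headL d x i = x i.castSucc := rfl

theorem lastL_apply (d : ℕ) (x : Esp (d+1)) : lastL d x = x (Fin.last d) := rfl

@[simp] theorem graphMk_castSucc (d : ℕ) (x' : Esp d) (s : ℝ) (i : Fin d) :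
    graphMk d x' s i.castSucc = x' i := by
  simp [graphMk]

@[simp] theorem graphMk_last (d : ℕ) (x' : Esp d) (s : ℝ) :
    graphMk d x' s (Fin.last d) = s := by
  simp [graphMk]

@[simp] theorem headL_graphMk (d : ℕ) (x' : Esp d) (s : ℝ) : headL d (graphMk d x' s) = x' := by
  ext i; simp [headL_apply]

@[simp] theorem lastL_graphMk (d : ℕ) (x' : Esp d) (s : ℝ) : lastL d (graphMk d x' s) = s := by
  simp [lastL_apply]

theorem graphMk_headL_lastL (d : ℕ) (x : Esp (d+1)) : graphMk d (headL d x) (lastL d x) = x := by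
  ext i
  refine Fin.lastCases ?_ (fun i => ?_) i
  · simp [lastL_apply]
  · simp [headL_apply]

theorem inner_graphMk (d : ℕ) (h : Esp (d+1)) (a : Esp d) (b : ℝ) :
    ⟪h, graphMk d a b⟫ = ⟪headL d h, a⟫ + lastL d h * b := by
  simp only [PiLp.inner_apply, Fin.sum_univ_castSucc, graphMk_castSucc, graphMk_last, headL_apply,
    lastL_apply]
  simp [mul_comm]

theorem norm_graphMk_sq (d : ℕ) (a : Esp d) (b : ℝ) :
    ‖graphMk d a b‖ ^ 2 = ‖a‖ ^ 2 + b ^ 2 := by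
  rw [← real_inner_self_eq_norm_sq, inner_graphMk, headL_graphMk, lastL_graphMk,
    real_inner_self_eq_norm_sq, sq b]

theorem norm_headL_le (d : ℕ) (x : Esp (d+1)) : ‖headL d x‖ ≤ ‖x‖ := by
  have h := norm_graphMk_sq d (headL d x) (lastL d x)
  rw [graphMk_headL_lastL] at h
  nlinarith [norm_nonneg x, norm_nonneg (headL d x), sq_nonneg (lastL d x)]

theorem abs_lastL_le (d : ℕ) (x : Esp (d+1)) : |lastL d x| ≤ ‖x‖ :=
  PiLp.norm_apply_le x (Fin.last d)

theorem norm_graphMk_le (d : ℕ) (a : Esp d) (b : ℝ) : ‖graphMk d a b‖ ≤ ‖a‖ + |b| := by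
  have h := norm_graphMk_sq d a b
  rw [← sq_abs b] at h
  exact abs_le_of_sq_le_sq' (by nlinarith [norm_nonneg a, abs_nonneg b]) (by positivity) |>.2

theorem continuous_graphMk (d : ℕ) : Continuous fun p : Esp d × ℝ => graphMk d p.1 p.2 := by
  unfold graphMk
  refine (EuclideanSpace.equiv (Fin (d+1)) ℝ).symm.continuous.comp ?_
  refine continuous_pi fun i => ?_
  refine Fin.lastCases ?_ (fun i => ?_) i
  · simpa using continuous_snd
  · simp; fun_prop

/-- The homeomorphism `ℝ^d × ℝ ≃ ℝ^{d+1}`. -/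
def graphHomeomorph (d : ℕ) : Esp d × ℝ ≃ₜ Esp (d+1) where
  toFun p := graphMk d p.1 p.2
  invFun x := (headL d x, lastL d x)
  left_inv p := by simp
  right_inv x := graphMk_headL_lastL d x
  continuous_toFun := continuous_graphMk d
  continuous_invFun := (headL d).continuous.prodMk (lastL d).continuous

theorem measurePreserving_graphHomeomorph (d : ℕ) :
    MeasurePreserving (graphHomeomorph d) (volume.prod volume) volume := by
  have h1 := (volume_preserving_piFinSuccAbove (fun _ : Fin (d+1) => ℝ) (Fin.last d)).symm
  have h2 := (PiLp.volume_preserving_toLp (Fin (d+1))).comp h1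
  have h3 : MeasurePreserving (fun p : Esp d × ℝ => (p.2, WithLp.ofLp p.1))
      (volume.prod volume) (volume.prod volume) :=
    (((MeasurePreserving.id (volume : Measure ℝ)).prod
      (PiLp.volume_preserving_ofLp (Fin d))).comp
      (Measure.measurePreserving_swap (μ := (volume : Measure (Esp d)))
        (ν := (volume : Measure ℝ))))
  have h4 : ⇑(graphHomeomorph d) = (WithLp.toLp 2 ∘
      ⇑(MeasurableEquiv.piFinSuccAbove (fun _ : Fin (d+1) => ℝ) (Fin.last d)).symm) ∘
      fun p : Esp d × ℝ => (p.2, WithLp.ofLp p.1) := by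
    ext p i
    refine Fin.lastCases ?_ (fun i => ?_) i
    · simp [graphHomeomorph, MeasurableEquiv.piFinSuccAbove]
    · simp [graphHomeomorph, MeasurableEquiv.piFinSuccAbove]
  rw [h4]
  exact h2.comp h3

theorem integrable_comp_graphMk {d : ℕ} {G : Esp (d+1) → ℝ} (hG : Integrable G) :
    Integrable (fun p : Esp d × ℝ => G (graphMk d p.1 p.2)) (volume.prod volume) :=
  ((measurePreserving_graphHomeomorph d).integrable_comp_emb
    (graphHomeomorph d).measurableEmbedding).2 hG

theorem integral_eq_integral_graphMk {d : ℕ} {G : Esp (d+1) → ℝ} (hG : Integrable G) :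
    ∫ x, G x = ∫ x' : Esp d, ∫ s : ℝ, G (graphMk d x' s) := by
  rw [← (measurePreserving_graphHomeomorph d).integral_comp
    (graphHomeomorph d).measurableEmbedding G]
  exact integral_prod _ (integrable_comp_graphMk hG)

theorem mem_graphDomain {d : ℕ} {ρ₁ : ℝ} {ℓ ℓt : Esp d → ℝ} {x : Esp (d+1)} :
    x ∈ graphDomain d ρ₁ ℓ ℓt ↔ ‖headL d x‖ < ρ₁ ∧
      ℓ (headL d x) - ℓt (headL d x) < lastL d x ∧ lastL d x < ℓ (headL d x) := by
  constructor
  · rintro ⟨x', s, h1, h2, h3, rfl⟩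
    simpa using ⟨h1, h2, h3⟩
  · rintro ⟨h1, h2, h3⟩
    exact ⟨_, _, h1, h2, h3, (graphMk_headL_lastL d x).symm⟩

theorem isOpen_graphDomain {d : ℕ} {ρ₁ : ℝ} {ℓ ℓt : Esp d → ℝ}
    (hℓ : ContinuousOn ℓ (closedBall 0 ρ₁)) (hℓt : ContinuousOn ℓt (closedBall 0 ρ₁)) :
    IsOpen (graphDomain d ρ₁ ℓ ℓt) := by
  refine isOpen_iff_mem_nhds.2 fun x hx => ?_
  obtain ⟨h1, h2, h3⟩ := mem_graphDomain.1 hx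
  have hnb : closedBall (0 : Esp d) ρ₁ ∈ 𝓝 (headL d x) :=
    mem_of_superset (isOpen_ball.mem_nhds (mem_ball_zero_iff.2 h1)) ball_subset_closedBall
  have c0 : ContinuousAt (headL d) x := (headL d).continuous.continuousAt
  have cl : ContinuousAt (lastL d) x := (lastL d).continuous.continuousAt
  have c1 : ContinuousAt (fun x => ℓ (headL d x)) x :=
    ContinuousAt.comp (hℓ.continuousAt hnb) c0
  have c2 : ContinuousAt (fun x => ℓt (headL d x)) x :=
    ContinuousAt.comp (hℓt.continuousAt hnb) c0
  filter_upwards [c0.norm.eventually_lt continuousAt_const h1, (c1.sub c2).eventually_lt cl h2,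
    cl.eventually_lt c1 h3] with z a b c using mem_graphDomain.2 ⟨a, b, c⟩

theorem isCompact_closure_graphDomain {d : ℕ} {ρ₁ : ℝ} {ℓ ℓt : Esp d → ℝ}
    (hℓ : ContinuousOn ℓ (closedBall 0 ρ₁)) (hℓt : ContinuousOn ℓt (closedBall 0 ρ₁)) :
    IsCompact (closure (graphDomain d ρ₁ ℓ ℓt)) := by
  obtain ⟨A, hA⟩ := (isCompact_closedBall (0 : Esp d) ρ₁).exists_bound_of_continuousOn hℓ
  obtain ⟨B, hB⟩ := (isCompact_closedBall (0 : Esp d) ρ₁).exists_bound_of_continuousOn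
    (hℓ.sub hℓt)
  refine (isBounded_iff_forall_norm_le.2 ⟨ρ₁ + (A + B), ?_⟩).isCompact_closure
  rintro x ⟨x', s, h1, h2, h3, rfl⟩
  have hx : x' ∈ closedBall (0 : Esp d) ρ₁ := mem_closedBall_zero_iff.2 h1.le
  have a := abs_le.1 (hA x' hx)
  have b := abs_le.1 (hB x' hx)
  rw [Pi.sub_apply] at b
  have a0 := (norm_nonneg _).trans (hA x' hx)
  have b0 := (norm_nonneg _).trans (hB x' hx)
  have : |s| ≤ A + B := abs_le.2 ⟨by linarith, by linarith⟩
  linarith [norm_graphMk_le d x' s]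

theorem graphMk_mem_closure {d : ℕ} {ρ₁ : ℝ} {ℓ ℓt : Esp d → ℝ} {x' : Esp d} (hx' : ‖x'‖ < ρ₁)
    (hpos : 0 < ℓt x') {s : ℝ} (hs : s ∈ Icc (ℓ x' - ℓt x') (ℓ x')) :
    graphMk d x' s ∈ closure (graphDomain d ρ₁ ℓ ℓt) := by
  rw [← closure_Ioo (by linarith : ℓ x' - ℓt x' ≠ ℓ x')] at hs
  have hc : Continuous fun s => graphMk d x' s :=
    (continuous_graphMk d).comp (by fun_prop : Continuous fun s : ℝ => (x', s))
  refine map_mem_closure hc hs fun s hs => ?_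
  exact ⟨x', s, hx', hs.1, hs.2, rfl⟩

theorem omegaW_pos (d : ℕ) (m : Esp d → ℝ) (z : Esp d) : 0 < omegaW d m z :=
  Real.sqrt_pos.2 (by positivity)

theorem inner_nuUp_mul_omegaW (d : ℕ) (ℓ : Esp d → ℝ) (z : Esp d) (h : Esp (d+1)) :
    ⟪h, nuUp d ℓ z⟫ * omegaW d ℓ z = lastL d h - fderiv ℝ ℓ z (headL d h) := by
  have h0 := (omegaW_pos d ℓ z).ne'
  unfold omegaW at h0 ⊢
  rw [nuUp, inner_smul_right, inner_graphMk, inner_neg_right, real_inner_comm, inner_gradient_left]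
  field_simp
  ring

theorem inner_nuDown_mul_omegaW (d : ℕ) (m : Esp d → ℝ) (z : Esp d) (h : Esp (d+1)) :
    ⟪h, nuDown d m z⟫ * omegaW d m z = fderiv ℝ m z (headL d h) - lastL d h := by
  have h0 := (omegaW_pos d m z).ne'
  unfold omegaW at h0 ⊢
  rw [nuDown, inner_smul_right, inner_graphMk, real_inner_comm, inner_gradient_left]
  field_simp
  ring

theorem norm_nuUp (d : ℕ) (ℓ : Esp d → ℝ) (z : Esp d) : ‖nuUp d ℓ z‖ = 1 := by
  have h0 : Real.sqrt (1 + ‖gradient ℓ z‖ ^ 2) ≠ 0 := (omegaW_pos d ℓ z).ne'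
  have h := norm_graphMk_sq d (-gradient ℓ z) 1
  have : ‖graphMk d (-gradient ℓ z) 1‖ = Real.sqrt (1 + ‖gradient ℓ z‖ ^ 2) := by
    rw [← Real.sqrt_sq (norm_nonneg (graphMk d (-gradient ℓ z) 1)), h, norm_neg]
    congr 1; ring
  rw [nuUp, norm_smul, this, norm_inv, Real.norm_of_nonneg (Real.sqrt_nonneg _),
    inv_mul_cancel₀ h0]

theorem norm_nuDown (d : ℕ) (m : Esp d → ℝ) (z : Esp d) : ‖nuDown d m z‖ = 1 := by
  have h0 : Real.sqrt (1 + ‖gradient m z‖ ^ 2) ≠ 0 := (omegaW_pos d m z).ne'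
  have h := norm_graphMk_sq d (gradient m z) (-1)
  have : ‖graphMk d (gradient m z) (-1)‖ = Real.sqrt (1 + ‖gradient m z‖ ^ 2) := by
    rw [← Real.sqrt_sq (norm_nonneg (graphMk d (gradient m z) (-1))), h]
    congr 1; ring
  rw [nuDown, norm_smul, this, norm_inv, Real.norm_of_nonneg (Real.sqrt_nonneg _),
    inv_mul_cancel₀ h0]

/-- Cutoff of the domain between the graphs of `ℓ - ℓt` and `ℓ`, vanishing at vertical distance
at most `ε` from either graph. -/
def graphCutoff (d : ℕ) (ρ₁ : ℝ) (ℓ ℓt : Esp d → ℝ) (ε : ℝ) (x : Esp (d+1)) : ℝ :=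
  (headL d ⁻¹' ball 0 ρ₁).indicator (fun x =>
    smoothStep ((ℓ (headL d x) - lastL d x) / ε) *
      smoothStep ((lastL d x - (ℓ (headL d x) - ℓt (headL d x))) / ε)) x

theorem graphCutoff_nonneg (d : ℕ) (ρ₁ : ℝ) (ℓ ℓt : Esp d → ℝ) (ε : ℝ) (x : Esp (d+1)) :
    0 ≤ graphCutoff d ρ₁ ℓ ℓt ε x :=
  indicator_nonneg (fun _ _ => mul_nonneg (smoothStep_nonneg _) (smoothStep_nonneg _)) x

theorem graphCutoff_le_one (d : ℕ) (ρ₁ : ℝ) (ℓ ℓt : Esp d → ℝ) (ε : ℝ) (x : Esp (d+1)) :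
    graphCutoff d ρ₁ ℓ ℓt ε x ≤ 1 :=
  indicator_le_self' (fun _ _ => zero_le_one) x |>.trans' (indicator_le_indicator
    (mul_le_one₀ (smoothStep_le_one _) (smoothStep_nonneg _) (smoothStep_le_one _)))

/-- The points of the closed cylinder at vertical distance at least `ε` from both graphs. -/
def graphCore (d : ℕ) (ρ₁ : ℝ) (ℓ ℓt : Esp d → ℝ) (ε : ℝ) : Set (Esp (d+1)) :=
  {x | ‖headL d x‖ ≤ ρ₁ ∧ ε ≤ ℓ (headL d x) - lastL d x ∧
    ε ≤ lastL d x - (ℓ (headL d x) - ℓt (headL d x))}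

section Geometry

variable {d : ℕ} {ρ₁ : ℝ} {ℓ ℓt : Esp d → ℝ}

theorem isClosed_graphCore (hℓ : ContinuousOn ℓ (closedBall 0 ρ₁))
    (hℓt : ContinuousOn ℓt (closedBall 0 ρ₁)) (ε : ℝ) : IsClosed (graphCore d ρ₁ ℓ ℓt ε) := by
  have hA : IsClosed (headL d ⁻¹' closedBall (0 : Esp d) ρ₁) :=
    isClosed_closedBall.preimage (headL d).continuous
  have c1 : ContinuousOn (fun x => ℓ (headL d x)) (headL d ⁻¹' closedBall (0 : Esp d) ρ₁) :=
    hℓ.comp (headL d).continuous.continuousOn fun x hx => hx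
  have c2 : ContinuousOn (fun x => ℓt (headL d x)) (headL d ⁻¹' closedBall (0 : Esp d) ρ₁) :=
    hℓt.comp (headL d).continuous.continuousOn fun x hx => hx
  have cl : ContinuousOn (fun x => lastL d x) (headL d ⁻¹' closedBall (0 : Esp d) ρ₁) :=
    (lastL d).continuous.continuousOn
  have h1 := (c1.sub cl).preimage_isClosed_of_isClosed hA (isClosed_Ici (a := ε))
  have h2 := (cl.sub (c1.sub c2)).preimage_isClosed_of_isClosed hA (isClosed_Ici (a := ε))
  convert h1.inter h2 using 1
  ext x
  simp only [graphCore, mem_ofPred_eq, mem_inter_iff, mem_preimage, mem_closedBall_zero_iff, mem_Ici,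
    Pi.sub_apply]
  tauto

theorem graphCore_subset (hℓt0 : ∀ x' : Esp d, ‖x'‖ = ρ₁ → ℓt x' = 0) {ε : ℝ} (hε : 0 < ε) :
    graphCore d ρ₁ ℓ ℓt ε ⊆ graphDomain d ρ₁ ℓ ℓt := by
  rintro x ⟨h1, h2, h3⟩
  refine mem_graphDomain.2 ⟨lt_of_le_of_ne h1 fun h => ?_, by linarith, by linarith⟩
  linarith [hℓt0 _ h]

theorem support_graphCutoff_subset {ε : ℝ} (hε : 0 < ε) :
    Function.support (graphCutoff d ρ₁ ℓ ℓt ε) ⊆ graphCore d ρ₁ ℓ ℓt ε := by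
  intro x hx
  have hb : x ∈ headL d ⁻¹' ball (0 : Esp d) ρ₁ := by
    by_contra h
    exact hx (indicator_of_notMem h _)
  have hv : smoothStep ((ℓ (headL d x) - lastL d x) / ε) *
      smoothStep ((lastL d x - (ℓ (headL d x) - ℓt (headL d x))) / ε) ≠ 0 := by
    have := hx
    rwa [Function.mem_support, graphCutoff, indicator_of_mem hb] at this
  have aux : ∀ {r : ℝ}, smoothStep (r / ε) ≠ 0 → ε ≤ r := fun {r} h => by
    by_contra! hr
    exact h (smoothStep_of_le_one ((div_le_one hε).2 hr.le))
  exact ⟨(mem_ball_zero_iff.1 hb).le, aux (left_ne_zero_of_mul hv), aux (right_ne_zero_of_mul hv)⟩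

theorem tsupport_graphCutoff_subset (hℓ : ContinuousOn ℓ (closedBall 0 ρ₁))
    (hℓt : ContinuousOn ℓt (closedBall 0 ρ₁)) {ε : ℝ} (hε : 0 < ε) :
    tsupport (graphCutoff d ρ₁ ℓ ℓt ε) ⊆ graphCore d ρ₁ ℓ ℓt ε :=
  closure_minimal (support_graphCutoff_subset hε) (isClosed_graphCore hℓ hℓt ε)

theorem hasCompactSupport_graphCutoff (hℓ : ContinuousOn ℓ (closedBall 0 ρ₁))
    (hℓt : ContinuousOn ℓt (closedBall 0 ρ₁)) (hℓt0 : ∀ x' : Esp d, ‖x'‖ = ρ₁ → ℓt x' = 0)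
    {ε : ℝ} (hε : 0 < ε) : HasCompactSupport (graphCutoff d ρ₁ ℓ ℓt ε) :=
  (isCompact_closure_graphDomain hℓ hℓt).of_isClosed_subset (isClosed_tsupport _)
    ((tsupport_graphCutoff_subset hℓ hℓt hε).trans
      ((graphCore_subset hℓt0 hε).trans subset_closure))

theorem graphCutoff_eventuallyEq {x : Esp (d+1)} (hx : ‖headL d x‖ < ρ₁) (ε : ℝ) :
    graphCutoff d ρ₁ ℓ ℓt ε =ᶠ[𝓝 x] fun x =>
      smoothStep ((ℓ (headL d x) - lastL d x) / ε) *
        smoothStep ((lastL d x - (ℓ (headL d x) - ℓt (headL d x))) / ε) := by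
  have : headL d ⁻¹' ball (0 : Esp d) ρ₁ ∈ 𝓝 x :=
    (isOpen_ball.preimage (headL d).continuous).mem_nhds (mem_ball_zero_iff.2 hx)
  filter_upwards [this] with z hz using indicator_of_mem hz _

theorem contDiff_graphCutoff (hℓ : ContDiffOn ℝ 1 ℓ (closedBall 0 ρ₁))
    (hℓt : ContDiffOn ℝ 1 ℓt (closedBall 0 ρ₁)) (hℓt0 : ∀ x' : Esp d, ‖x'‖ = ρ₁ → ℓt x' = 0)
    {ε : ℝ} (hε : 0 < ε) : ContDiff ℝ 1 (graphCutoff d ρ₁ ℓ ℓt ε) := by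
  refine contDiff_iff_contDiffAt.2 fun x => ?_
  by_cases hx : x ∈ tsupport (graphCutoff d ρ₁ ℓ ℓt ε)
  · have hxD := graphCore_subset hℓt0 hε
      (tsupport_graphCutoff_subset hℓ.continuousOn hℓt.continuousOn hε hx)
    have hx1 := (mem_graphDomain.1 hxD).1
    have hnb : closedBall (0 : Esp d) ρ₁ ∈ 𝓝 (headL d x) :=
      mem_of_superset (isOpen_ball.mem_nhds (mem_ball_zero_iff.2 hx1)) ball_subset_closedBall
    refine ContDiffAt.congr_of_eventuallyEq ?_ (graphCutoff_eventuallyEq hx1 ε)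
    have c1 : ContDiffAt ℝ 1 (fun x => ℓ (headL d x)) x :=
      (hℓ.contDiffAt hnb).comp x (headL d).contDiff.contDiffAt
    have c2 : ContDiffAt ℝ 1 (fun x => ℓt (headL d x)) x :=
      (hℓt.contDiffAt hnb).comp x (headL d).contDiff.contDiffAt
    have cl : ContDiffAt ℝ 1 (fun x => lastL d x) x := (lastL d).contDiff.contDiffAt
    exact (contDiff_smoothStep.contDiffAt.comp x ((c1.sub cl).div_const ε)).mul
      (contDiff_smoothStep.contDiffAt.comp x ((cl.sub (c1.sub c2)).div_const ε))
  · exact (contDiffAt_const (c := (0 : ℝ))).congr_of_eventuallyEq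
      (notMem_tsupport_iff_eventuallyEq.1 hx)

theorem fderiv_graphCutoff_apply (hℓ : ContDiffOn ℝ 1 ℓ (closedBall 0 ρ₁))
    (hℓt : ContDiffOn ℝ 1 ℓt (closedBall 0 ρ₁)) {x' : Esp d} (hx' : ‖x'‖ < ρ₁) (s ε : ℝ)
    (h : Esp (d+1)) :
    fderiv ℝ (graphCutoff d ρ₁ ℓ ℓt ε) (graphMk d x' s) h =
      upperKernel ε (ℓ x' - ℓt x') (ℓ x') s * (fderiv ℝ ℓ x' (headL d h) - lastL d h) +
      lowerKernel ε (ℓ x' - ℓt x') (ℓ x') s *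
        (lastL d h - fderiv ℝ (fun z => ℓ z - ℓt z) x' (headL d h)) := by
  have hnb : closedBall (0 : Esp d) ρ₁ ∈ 𝓝 x' :=
    mem_of_superset (isOpen_ball.mem_nhds (mem_ball_zero_iff.2 hx')) ball_subset_closedBall
  have dℓ : HasFDerivAt ℓ (fderiv ℝ ℓ x') (headL d (graphMk d x' s)) := by
    rw [headL_graphMk]
    exact ((hℓ.contDiffAt hnb).differentiableAt one_ne_zero).hasFDerivAt
  have dm : HasFDerivAt (fun z => ℓ z - ℓt z) (fderiv ℝ (fun z => ℓ z - ℓt z) x')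
      (headL d (graphMk d x' s)) := by
    rw [headL_graphMk]
    exact (((hℓ.contDiffAt hnb).sub (hℓt.contDiffAt hnb)).differentiableAt
      one_ne_zero).hasFDerivAt
  have cl : HasFDerivAt (fun x => lastL d x) (lastL d) (graphMk d x' s) := (lastL d).hasFDerivAt
  have c1 := dℓ.comp _ (headL d).hasFDerivAt
  have c2 := dm.comp _ (headL d).hasFDerivAt
  have u1 := (hasDerivAt_smoothStep _).comp_hasFDerivAt _ ((c1.sub cl).mul_const ε⁻¹)
  have u2 := (hasDerivAt_smoothStep _).comp_hasFDerivAt _ ((cl.sub c2).mul_const ε⁻¹)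
  have hx1 : ‖headL d (graphMk d x' s)‖ < ρ₁ := by rwa [headL_graphMk]
  have e := (u1.mul u2).congr_of_eventuallyEq ((graphCutoff_eventuallyEq (ℓ := ℓ) (ℓt := ℓt) hx1 ε).trans
    (Eventually.of_forall fun x => by simp [div_eq_mul_inv]))
  rw [e.fderiv]
  simp [upperKernel, lowerKernel, div_eq_mul_inv]
  ring

theorem tendsto_graphCutoff {x : Esp (d+1)} (hx : x ∈ graphDomain d ρ₁ ℓ ℓt) :
    Tendsto (fun ε => graphCutoff d ρ₁ ℓ ℓt ε x) (𝓝[>] 0) (𝓝 1) := by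
  obtain ⟨h1, h2, h3⟩ := mem_graphDomain.1 hx
  refine tendsto_const_nhds.congr' ?_
  have aux : ∀ {r : ℝ}, 0 < r → ∀ᶠ ε : ℝ in 𝓝[>] 0, smoothStep (r / ε) = 1 := fun {r} hr => by
    filter_upwards [Ioo_mem_nhdsGT (half_pos hr)] with ε hε
    refine smoothStep_of_two_le ((le_div_iff₀ hε.1).2 ?_)
    linarith [hε.2]
  filter_upwards [aux (sub_pos.2 h3), aux (sub_pos.2 h2)] with ε a b
  have hb : x ∈ headL d ⁻¹' ball (0 : Esp d) ρ₁ := mem_ball_zero_iff.2 h1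
  rw [graphCutoff, indicator_of_mem hb, a, b, one_mul]

end Geometry

theorem exists_norm_fderiv_le_ball {d : ℕ} {ρ₁ : ℝ} (hρ₁ : 0 < ρ₁) {m : Esp d → ℝ}
    (hm : ContDiffOn ℝ 1 m (closedBall 0 ρ₁)) :
    ∃ L : ℝ, 0 ≤ L ∧ ∀ z ∈ ball (0 : Esp d) ρ₁, ‖fderiv ℝ m z‖ ≤ L := by
  have hu : UniqueDiffOn ℝ (closedBall (0 : Esp d) ρ₁) :=
    uniqueDiffOn_convex (convex_closedBall _ _)
      ((nonempty_ball.2 hρ₁).mono (interior_maximal ball_subset_closedBall isOpen_ball))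
  obtain ⟨L, hL⟩ := (isCompact_closedBall (0 : Esp d) ρ₁).exists_bound_of_continuousOn
    (hm.continuousOn_fderivWithin hu le_rfl)
  refine ⟨max L 0, le_max_right _ _, fun z hz => ?_⟩
  rw [← fderivWithin_of_mem_nhds (mem_of_superset (isOpen_ball.mem_nhds hz) ball_subset_closedBall)]
  exact (hL z (ball_subset_closedBall hz)).trans (le_max_left _ _)

theorem continuousOn_fderiv_ball {d : ℕ} {ρ₁ : ℝ} {m : Esp d → ℝ}
    (hm : ContDiffOn ℝ 1 m (closedBall 0 ρ₁)) : ContinuousOn (fderiv ℝ m) (ball 0 ρ₁) :=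
  (hm.mono ball_subset_closedBall).continuousOn_fderiv_of_isOpen isOpen_ball le_rfl

theorem omegaW_eq (d : ℕ) (m : Esp d → ℝ) (z : Esp d) :
    omegaW d m z = √(1 + ‖fderiv ℝ m z‖ ^ 2) := by
  simp [omegaW, gradient]

theorem upperKernel_eq_zero {ε a b s : ℝ} (hε : 0 < ε) (hs : s ∉ Icc a b) :
    upperKernel ε a b s = 0 := by
  rcases lt_or_ge s a with h | h
  · rw [upperKernel, smoothStep_of_le_one, mul_zero]
    exact (div_nonpos_of_nonpos_of_nonneg (by linarith) hε.le).trans zero_le_one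
  · have h' : b < s := not_le.1 fun h' => hs ⟨h, h'⟩
    rw [upperKernel, deriv_smoothStep_eq_zero, mul_zero, zero_mul]
    intro h1
    have := div_neg_of_neg_of_pos (sub_neg.2 h') hε
    linarith [h1.1]

theorem lowerKernel_eq_zero {ε a b s : ℝ} (hε : 0 < ε) (hs : s ∉ Icc a b) :
    lowerKernel ε a b s = 0 := by
  have := upperKernel_eq_zero (a := -b) (b := -a) (s := -s) hε
    fun h => hs ⟨by linarith [h.2], by linarith [h.1]⟩
  simpa [upperKernel, lowerKernel, neg_add_eq_sub] using this

theorem integrable_kernel_mul {a b : ℝ} {k g : ℝ → ℝ} (hk : Continuous k)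
    (h0 : ∀ s, s ∉ Icc a b → k s = 0) (hg : ContinuousOn g (Icc a b)) :
    Integrable fun s => k s * g s := by
  have : (fun s => k s * g s) = (Icc a b).indicator fun s => k s * g s := by
    refine (indicator_eq_self.2 fun s hs => ?_).symm
    by_contra h
    exact hs (by simp [h0 s h])
  rw [this]
  exact (hk.continuousOn.mul hg).integrableOn_compact isCompact_Icc |>.integrable_indicator
    measurableSet_Icc

theorem continuous_upperKernel (ε a b : ℝ) : Continuous (upperKernel ε a b) :=
  (continuous_const.mul (continuous_deriv_smoothStep.comp (by fun_prop))).mul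
    (contDiff_smoothStep.continuous.comp (by fun_prop))

theorem continuous_lowerKernel (ε a b : ℝ) : Continuous (lowerKernel ε a b) :=
  (continuous_const.mul (continuous_deriv_smoothStep.comp (by fun_prop))).mul
    (contDiff_smoothStep.continuous.comp (by fun_prop))

section Boundary

variable {d : ℕ} {ρ₁ : ℝ} {ℓ ℓt : Esp d → ℝ}

/-- Slice integrals of `⟨∇χ, H⟩ q` for the cutoff `χ`. -/
theorem integral_slice_fderiv_graphCutoff (hℓ : ContDiffOn ℝ 1 ℓ (closedBall 0 ρ₁))
    (hℓt : ContDiffOn ℝ 1 ℓt (closedBall 0 ρ₁))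
    (hpos : ∀ x' : Esp d, ‖x'‖ < ρ₁ → 0 < ℓt x')
    {H : Esp (d+1) → Esp (d+1)} (hH : ContinuousOn H (closure (graphDomain d ρ₁ ℓ ℓt)))
    {q : Esp (d+1) → ℝ} (hq : ContinuousOn q (closure (graphDomain d ρ₁ ℓ ℓt)))
    {x' : Esp d} (hx' : ‖x'‖ < ρ₁) {ε : ℝ} (hε : 0 < ε) :
    ∫ s, fderiv ℝ (graphCutoff d ρ₁ ℓ ℓt ε) (graphMk d x' s) (H (graphMk d x' s)) *
        q (graphMk d x' s) =
      (∫ s, upperKernel ε (ℓ x' - ℓt x') (ℓ x') s *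
        ((fderiv ℝ ℓ x' (headL d (H (graphMk d x' s))) - lastL d (H (graphMk d x' s))) *
          q (graphMk d x' s))) +
      ∫ s, lowerKernel ε (ℓ x' - ℓt x') (ℓ x') s *
        ((lastL d (H (graphMk d x' s)) -
          fderiv ℝ (fun z => ℓ z - ℓt z) x' (headL d (H (graphMk d x' s)))) *
          q (graphMk d x' s)) := by
  have hc : ContinuousOn (fun s => graphMk d x' s) (Icc (ℓ x' - ℓt x') (ℓ x')) :=
    ((continuous_graphMk d).comp (by fun_prop : Continuous fun s : ℝ => (x', s))).continuousOn
  have hmaps : MapsTo (fun s => graphMk d x' s) (Icc (ℓ x' - ℓt x') (ℓ x'))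
      (closure (graphDomain d ρ₁ ℓ ℓt)) := fun s hs => graphMk_mem_closure hx' (hpos x' hx') hs
  have cH := hH.comp hc hmaps
  have cq := hq.comp hc hmaps
  have c1 : ContinuousOn (fun s => headL d (H (graphMk d x' s))) (Icc (ℓ x' - ℓt x') (ℓ x')) :=
    (headL d).continuous.comp_continuousOn cH
  have c2 : ContinuousOn (fun s => lastL d (H (graphMk d x' s))) (Icc (ℓ x' - ℓt x') (ℓ x')) :=
    (lastL d).continuous.comp_continuousOn cH
  rw [← integral_add]
  · refine integral_congr_ae (Eventually.of_forall fun s => ?_)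
    simp only [fderiv_graphCutoff_apply hℓ hℓt hx' s ε]
    ring
  · exact integrable_kernel_mul (continuous_upperKernel _ _ _)
      (fun s hs => upperKernel_eq_zero hε hs)
      ((((fderiv ℝ ℓ x').continuous.comp_continuousOn c1).sub c2).mul cq)
  · exact integrable_kernel_mul (continuous_lowerKernel _ _ _)
      (fun s hs => lowerKernel_eq_zero hε hs)
      ((c2.sub ((fderiv ℝ (fun z => ℓ z - ℓt z) x').continuous.comp_continuousOn c1)).mul cq)

/-- As the cutoff exhausts the domain, `∫ ⟨∇χ, H⟩ q` converges to minus the boundary flux of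
`q H`, and it stays bounded in terms of a bound for `q`. -/
theorem tendsto_integral_fderiv_graphCutoff (hρ₁ : 0 < ρ₁)
    (hℓ : ContDiffOn ℝ 1 ℓ (closedBall 0 ρ₁))
    (hℓt : ContDiffOn ℝ 1 ℓt (closedBall 0 ρ₁))
    (hpos : ∀ x' : Esp d, ‖x'‖ < ρ₁ → 0 < ℓt x')
    (hℓt0 : ∀ x' : Esp d, ‖x'‖ = ρ₁ → ℓt x' = 0)
    {H : Esp (d+1) → Esp (d+1)} (hH : ContinuousOn H (closure (graphDomain d ρ₁ ℓ ℓt)))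
    (c : ℝ) :
    ∃ A : ℝ, ∀ q : Esp (d+1) → ℝ, ContinuousOn q (closure (graphDomain d ρ₁ ℓ ℓt)) →
      (∀ x ∈ closure (graphDomain d ρ₁ ℓ ℓt), |q x| ≤ c) →
      (∀ ε > 0, |∫ x, fderiv ℝ (graphCutoff d ρ₁ ℓ ℓt ε) x (H x) * q x| ≤ A) ∧
      Tendsto (fun ε => ∫ x, fderiv ℝ (graphCutoff d ρ₁ ℓ ℓt ε) x (H x) * q x) (𝓝[>] 0)
        (𝓝 (∫ z in ball (0 : Esp d) ρ₁,
          (-(⟪H (graphMk d z (ℓ z)), nuUp d ℓ z⟫ * omegaW d ℓ z) * q (graphMk d z (ℓ z)) +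
            -(⟪H (graphMk d z (ℓ z - ℓt z)), nuDown d (fun z => ℓ z - ℓt z) z⟫ *
              omegaW d (fun z => ℓ z - ℓt z) z) * q (graphMk d z (ℓ z - ℓt z))))) := by
  obtain ⟨L, hL0, hL⟩ := exists_norm_fderiv_le_ball hρ₁ hℓ
  obtain ⟨L', hL'0, hL'⟩ := exists_norm_fderiv_le_ball hρ₁ (hℓ.sub hℓt)
  obtain ⟨B, hB0, hB⟩ := exists_deriv_smoothStep_bound
  have hK := isCompact_closure_graphDomain hℓ.continuousOn hℓt.continuousOn
  have hDo := isOpen_graphDomain hℓ.continuousOn hℓt.continuousOn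
  obtain ⟨N, hN⟩ := hK.exists_bound_of_continuousOn hH
  set N' := max N 0
  have hN'0 : 0 ≤ N' := le_max_right _ _
  have hN' : ∀ x ∈ closure (graphDomain d ρ₁ ℓ ℓt), ‖H x‖ ≤ N' := fun x hx =>
    (hN x hx).trans (le_max_left _ _)
  set c' := max c 0
  have hc'0 : 0 ≤ c' := le_max_right _ _
  set E := B * ((L * N' + N') * c') + B * ((N' + L' * N') * c')
  refine ⟨∫ z, (ball (0 : Esp d) ρ₁).indicator (fun _ => E) z, fun q hq hqc => ?_⟩
  have hInt : ∀ ε > 0, Integrable fun x =>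
      fderiv ℝ (graphCutoff d ρ₁ ℓ ℓt ε) x (H x) * q x := fun ε hε => by
    have hs := (tsupport_graphCutoff_subset hℓ.continuousOn hℓt.continuousOn hε).trans
      (graphCore_subset hℓt0 hε)
    refine integrable_mul_of_tsupport_subset hDo
      (continuous_fderiv_apply_of_tsupport_subset hDo (hH.mono subset_closure)
        (contDiff_graphCutoff hℓ hℓt hℓt0 hε) hs) ?_
      (tsupport_fderiv_apply_field_subset.trans hs) (hq.mono subset_closure)
    exact (hasCompactSupport_graphCutoff hℓ.continuousOn hℓt.continuousOn hℓt0 hε).of_isClosed_subset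
      (isClosed_tsupport _) tsupport_fderiv_apply_field_subset
  set J : ℝ → Esp d → ℝ := fun ε z => ∫ s, fderiv ℝ (graphCutoff d ρ₁ ℓ ℓt ε) (graphMk d z s)
    (H (graphMk d z s)) * q (graphMk d z s) with hJ
  have hJint : ∀ ε > 0, Integrable (J ε) := fun ε hε =>
    (integrable_comp_graphMk (hInt ε hε)).integral_prod_left
  have hJeq : ∀ ε > 0, ∫ x, fderiv ℝ (graphCutoff d ρ₁ ℓ ℓt ε) x (H x) * q x = ∫ z, J ε z :=
    fun ε hε => integral_eq_integral_graphMk (hInt ε hε)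
  have hJ0 : ∀ ε > 0, ∀ z ∉ ball (0 : Esp d) ρ₁, J ε z = 0 := fun ε hε z hz => by
    refine integral_eq_zero_of_ae (Eventually.of_forall fun s => ?_)
    have : graphMk d z s ∉ tsupport (graphCutoff d ρ₁ ℓ ℓt ε) := fun h => by
      have h1 := (mem_graphDomain.1 (graphCore_subset hℓt0 hε
        (tsupport_graphCutoff_subset hℓ.continuousOn hℓt.continuousOn hε h))).1
      rw [headL_graphMk] at h1
      exact hz (mem_ball_zero_iff.2 h1)
    simp [fderiv_of_notMem_tsupport ℝ this]
  have hmem : ∀ z ∈ ball (0 : Esp d) ρ₁, ∀ s ∈ Icc (ℓ z - ℓt z) (ℓ z),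
      graphMk d z s ∈ closure (graphDomain d ρ₁ ℓ ℓt) := fun z hz s hs =>
    graphMk_mem_closure (mem_ball_zero_iff.1 hz) (hpos z (mem_ball_zero_iff.1 hz)) hs
  have hqc' : ∀ x ∈ closure (graphDomain d ρ₁ ℓ ℓt), |q x| ≤ c' := fun x hx =>
    (hqc x hx).trans (le_max_left _ _)
  have hhead : ∀ x ∈ closure (graphDomain d ρ₁ ℓ ℓt), ‖headL d (H x)‖ ≤ N' := fun x hx =>
    (norm_headL_le d _).trans (hN' x hx)
  have hlast : ∀ x ∈ closure (graphDomain d ρ₁ ℓ ℓt), |lastL d (H x)| ≤ N' := fun x hx =>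
    (abs_lastL_le d _).trans (hN' x hx)
  have hJb : ∀ ε > 0, ∀ z, ‖J ε z‖ ≤ (ball (0 : Esp d) ρ₁).indicator (fun _ => E) z := by
    intro ε hε z
    by_cases hz : z ∈ ball (0 : Esp d) ρ₁
    · rw [indicator_of_mem hz, hJ]
      simp only
      rw [integral_slice_fderiv_graphCutoff hℓ hℓt hpos hH hq (mem_ball_zero_iff.1 hz) hε]
      refine (norm_add_le _ _).trans (add_le_add ?_ ?_)
      · refine abs_integral_upperKernel_mul_le hε hB (by positivity) fun s hs => ?_
        have hx := hmem z hz s hs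
        rw [abs_mul]
        refine mul_le_mul ((abs_sub _ _).trans (add_le_add ?_ (hlast _ hx))) (hqc' _ hx)
          (abs_nonneg _) (by positivity)
        exact ((fderiv ℝ ℓ z).le_opNorm _).trans
          (mul_le_mul (hL z hz) (hhead _ hx) (norm_nonneg _) hL0)
      · refine abs_integral_lowerKernel_mul_le hε hB (by positivity) fun s hs => ?_
        have hx := hmem z hz s hs
        rw [abs_mul]
        refine mul_le_mul ((abs_sub _ _).trans (add_le_add (hlast _ hx) ?_)) (hqc' _ hx)
          (abs_nonneg _) (by positivity)
        exact ((fderiv ℝ (fun z => ℓ z - ℓt z) z).le_opNorm _).trans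
          (mul_le_mul (hL' z hz) (hhead _ hx) (norm_nonneg _) hL'0)
    · rw [hJ0 ε hε z hz, norm_zero]
      exact indicator_nonneg (fun _ _ => by positivity) z
  have hEint : Integrable ((ball (0 : Esp d) ρ₁).indicator fun _ => E) :=
    (integrable_indicator_iff measurableSet_ball).2
      (integrableOn_const (measure_ball_lt_top.ne))
  refine ⟨fun ε hε => ?_, ?_⟩
  · rw [hJeq ε hε]
    exact norm_integral_le_of_norm_le hEint (Eventually.of_forall (hJb ε hε))
  · rw [← integral_indicator measurableSet_ball]
    refine Tendsto.congr' (f₁ := fun ε => ∫ z, J ε z) ?_ ?_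
    · filter_upwards [self_mem_nhdsWithin] with ε hε using (hJeq ε hε).symm
    refine tendsto_integral_filter_of_dominated_convergence _ ?_ ?_ hEint ?_
    · filter_upwards [self_mem_nhdsWithin] with ε hε using (hJint ε hε).aestronglyMeasurable
    · filter_upwards [self_mem_nhdsWithin] with ε hε using Eventually.of_forall (hJb ε hε)
    · refine Eventually.of_forall fun z => ?_
      by_cases hz : z ∈ ball (0 : Esp d) ρ₁
      · have hz' := mem_ball_zero_iff.1 hz
        have hlt : ℓ z - ℓt z < ℓ z := by linarith [hpos z hz']
        have hc : ContinuousOn (fun s => graphMk d z s) (Icc (ℓ z - ℓt z) (ℓ z)) :=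
          ((continuous_graphMk d).comp (by fun_prop : Continuous fun s : ℝ => (z, s))).continuousOn
        have cH := hH.comp hc (hmem z hz)
        have cq := hq.comp hc (hmem z hz)
        have c1 := (headL d).continuous.comp_continuousOn cH
        have c2 := (lastL d).continuous.comp_continuousOn cH
        have t1 := tendsto_integral_upperKernel_mul hlt
          ((((fderiv ℝ ℓ z).continuous.comp_continuousOn c1).sub c2).mul cq)
        have t2 := tendsto_integral_lowerKernel_mul hlt
          ((c2.sub ((fderiv ℝ (fun z => ℓ z - ℓt z) z).continuous.comp_continuousOn c1)).mul cq)
        rw [indicator_of_mem hz, inner_nuUp_mul_omegaW, inner_nuDown_mul_omegaW, neg_sub, neg_sub]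
        refine (t1.add t2).congr' ?_
        filter_upwards [self_mem_nhdsWithin] with ε hε
        exact (integral_slice_fderiv_graphCutoff hℓ hℓt hpos hH hq hz' hε).symm
      · rw [indicator_of_notMem hz]
        refine tendsto_const_nhds.congr' ?_
        filter_upwards [self_mem_nhdsWithin] with ε hε using (hJ0 ε hε z hz).symm

end Boundary

theorem continuousOn_weighted_integral_comp {d n : ℕ} {ρ₁ T c : ℝ} {K : Set (Esp n)}
    (hK : IsCompact K) {Q : Esp n → ℝ → ℝ}
    (hQ : ContinuousOn (fun q : Esp n × ℝ => Q q.1 q.2) (K ×ˢ Icc 0 T))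
    {γ : Esp d → Esp n} (hγ : ContinuousOn γ (ball 0 ρ₁)) (hγK : MapsTo γ (ball 0 ρ₁) K)
    {w : Esp d → ℝ} (hw : AEStronglyMeasurable w (volume.restrict (ball 0 ρ₁)))
    (hwc : ∀ z ∈ ball (0 : Esp d) ρ₁, |w z| ≤ c) :
    (∀ t ∈ Icc 0 T, IntegrableOn (fun z => w z * Q (γ z) t) (ball 0 ρ₁)) ∧
      ContinuousOn (fun t => ∫ z in ball 0 ρ₁, w z * Q (γ z) t) (Icc 0 T) := by
  obtain ⟨A, hA⟩ := (hK.prod isCompact_Icc).exists_bound_of_continuousOn hQ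
  have hmeas : ∀ t ∈ Icc 0 T, AEStronglyMeasurable (fun z => w z * Q (γ z) t)
      (volume.restrict (ball 0 ρ₁)) := fun t ht =>
    hw.mul ((hQ.comp (hγ.prodMk continuousOn_const)
      (fun z hz => ⟨hγK hz, ht⟩)).aestronglyMeasurable measurableSet_ball)
  have hbound : ∀ t ∈ Icc 0 T, ∀ᵐ z ∂(volume.restrict (ball (0 : Esp d) ρ₁)),
      ‖w z * Q (γ z) t‖ ≤ c * A := fun t ht =>
    (ae_restrict_iff' measurableSet_ball).2 (Eventually.of_forall fun z hz => by
      rw [norm_mul]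
      exact mul_le_mul (hwc z hz) (hA (γ z, t) ⟨hγK hz, ht⟩) (norm_nonneg _)
        ((abs_nonneg _).trans (hwc z hz)))
  have hconst : IntegrableOn (fun _ : Esp d => c * A) (ball 0 ρ₁) :=
    integrableOn_const measure_ball_lt_top.ne
  refine ⟨fun t ht => Integrable.mono' hconst (hmeas t ht) (hbound t ht), ?_⟩
  refine continuousOn_of_dominated hmeas hbound hconst ?_
  refine (ae_restrict_iff' measurableSet_ball).2 (Eventually.of_forall fun z hz => ?_)
  exact continuousOn_const.mul (hQ.comp (continuousOn_const.prodMk continuousOn_id)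
    (fun t ht => ⟨hγK hz, ht⟩))

/-- A continuous function `w = r ω` on a ball with `ω > 0` gives a measurable truncation of `ω` to
`{r ≤ 0}`. -/
theorem aestronglyMeasurable_indicator_nonpos {d : ℕ} {ρ₁ : ℝ} {r ω : Esp d → ℝ}
    (hω0 : ∀ z, 0 < ω z) (hω : ContinuousOn ω (ball 0 ρ₁))
    (hr : ContinuousOn (fun z => r z * ω z) (ball 0 ρ₁)) :
    AEStronglyMeasurable ({z | r z ≤ 0}.indicator ω) (volume.restrict (ball 0 ρ₁)) := by
  have h1 : Measurable ((Iic (0:ℝ)).indicator fun _ => (1:ℝ)) :=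
    measurable_const.indicator measurableSet_Iic
  have h2 := (h1.comp_aemeasurable (hr.aemeasurable (μ := volume) measurableSet_ball)).mul
    (hω.aemeasurable measurableSet_ball)
  refine h2.aestronglyMeasurable.congr (Eventually.of_forall fun z => ?_)
  by_cases h : r z ≤ 0
  · have h' : r z * ω z ≤ 0 := mul_nonpos_of_nonpos_of_nonneg h (hω0 z).le
    simp [h, h']
  · have h' : ¬ r z * ω z ≤ 0 := not_le.2 (mul_pos (not_le.1 h) (hω0 z))
    simp [h, h']

theorem neg_mul_le_indicator_nonpos {d : ℕ} {M : ℝ} {r ω : Esp d → ℝ} {z : Esp d}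
    (hω0 : 0 < ω z) (hr : |r z| ≤ M) :
    -(r z * ω z) ≤ M * {z | r z ≤ 0}.indicator ω z := by
  by_cases h : r z ≤ 0
  · rw [indicator_of_mem (show z ∈ {z | r z ≤ 0} from h)]
    nlinarith [neg_abs_le (r z)]
  · rw [indicator_of_notMem (show z ∉ {z | r z ≤ 0} from h)]
    nlinarith [not_le.1 h]

theorem intervalIntegral_le_mul_setIntegral {a b : ℝ → ℝ} {M T t₀ : ℝ} (hM : 0 ≤ M)
    (ht₀ : t₀ ∈ Icc 0 T) (ha : ContinuousOn a (Icc 0 T)) (hb : ContinuousOn b (Icc 0 T))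
    (hab : ∀ t ∈ Icc 0 T, a t ≤ M * b t) (hb0 : ∀ t ∈ Icc 0 T, 0 ≤ b t) :
    ∫ t in (0:ℝ)..t₀, a t ≤ M * ∫ t in Ioo 0 T, b t := by
  have hsub : Ioc 0 t₀ ⊆ Ioc 0 T := Ioc_subset_Ioc_right ht₀.2
  have ia : IntegrableOn a (Ioc 0 T) :=
    (ha.integrableOn_compact isCompact_Icc).mono_set Ioc_subset_Icc_self
  have ib : IntegrableOn (fun t => M * b t) (Ioc 0 T) :=
    ((hb.integrableOn_compact isCompact_Icc).mono_set Ioc_subset_Icc_self).const_mul M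
  rw [← integral_Ioc_eq_integral_Ioo, intervalIntegral.integral_of_le ht₀.1,
    ← integral_const_mul]
  refine (setIntegral_mono_on (ia.mono_set hsub) (ib.mono_set hsub) measurableSet_Ioc
    fun t ht => hab t (Ioc_subset_Icc_self (hsub ht))).trans
    (setIntegral_mono_set ib ?_ hsub.eventuallyLE)
  exact (ae_restrict_iff' measurableSet_Ioc).2 (Eventually.of_forall fun t ht =>
    mul_nonneg hM (hb0 t (Ioc_subset_Icc_self ht)))

section Energy

variable {d : ℕ} {ρ₁ : ℝ}

theorem continuousOn_omegaW {m : Esp d → ℝ} (hm : ContDiffOn ℝ 1 m (closedBall 0 ρ₁)) :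
    ContinuousOn (omegaW d m) (ball 0 ρ₁) := by
  simp only [funext (omegaW_eq d m)]
  exact (continuousOn_const.add ((continuousOn_fderiv_ball hm).norm.pow 2)).sqrt

theorem exists_omegaW_le (hρ₁ : 0 < ρ₁) {m : Esp d → ℝ}
    (hm : ContDiffOn ℝ 1 m (closedBall 0 ρ₁)) :
    ∃ c : ℝ, 0 ≤ c ∧ ∀ z ∈ ball (0 : Esp d) ρ₁, omegaW d m z ≤ c := by
  obtain ⟨L, hL0, hL⟩ := exists_norm_fderiv_le_ball hρ₁ hm
  refine ⟨√(1 + L ^ 2), Real.sqrt_nonneg _, fun z hz => ?_⟩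
  rw [omegaW_eq]
  have := hL z hz
  gcongr

theorem continuousOn_graphMk_graph {m : Esp d → ℝ} (hm : ContinuousOn m (closedBall 0 ρ₁)) :
    ContinuousOn (fun z => graphMk d z (m z)) (ball 0 ρ₁) :=
  (continuous_graphMk d).comp_continuousOn
    (continuousOn_id.prodMk (hm.mono ball_subset_closedBall))

/-- Contribution of one graph to the energy balance: the flux through it is bounded below by its
inflow part. -/
theorem boundary_flux_le (hρ₁ : 0 < ρ₁) {T M : ℝ} (hM : 0 ≤ M) {m : Esp d → ℝ}
    (hm : ContDiffOn ℝ 1 m (closedBall 0 ρ₁)) {K : Set (Esp (d+1))} (hK : IsCompact K)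
    (hmK : MapsTo (fun z => graphMk d z (m z)) (ball 0 ρ₁) K)
    {Q : Esp (d+1) → ℝ → ℝ}
    (hQ : ContinuousOn (fun q : Esp (d+1) × ℝ => Q q.1 q.2) (K ×ˢ Icc 0 T))
    (hQ0 : ∀ x ∈ K, ∀ t ∈ Icc 0 T, 0 ≤ Q x t)
    {r : Esp d → ℝ} (hr : ContinuousOn (fun z => r z * omegaW d m z) (ball 0 ρ₁))
    (hrM : ∀ z ∈ ball (0 : Esp d) ρ₁, |r z| ≤ M) :
    (∀ t ∈ Icc 0 T, IntegrableOn
      (fun z => -(r z * omegaW d m z) * Q (graphMk d z (m z)) t) (ball 0 ρ₁)) ∧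
    (∀ t ∈ Icc 0 T, IntegrableOn ({z | r z ≤ 0}.indicator
      fun z => Q (graphMk d z (m z)) t * omegaW d m z) (ball 0 ρ₁)) ∧
    ContinuousOn (fun t => ∫ z in ball 0 ρ₁,
      -(r z * omegaW d m z) * Q (graphMk d z (m z)) t) (Icc 0 T) ∧
    ContinuousOn (fun t => ∫ z in ball 0 ρ₁, {z | r z ≤ 0}.indicator
      (fun z => Q (graphMk d z (m z)) t * omegaW d m z) z) (Icc 0 T) ∧
    (∀ t ∈ Icc 0 T, ∫ z in ball 0 ρ₁, -(r z * omegaW d m z) * Q (graphMk d z (m z)) t ≤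
      M * ∫ z in ball 0 ρ₁, {z | r z ≤ 0}.indicator
        (fun z => Q (graphMk d z (m z)) t * omegaW d m z) z) ∧
    ∀ t ∈ Icc 0 T, 0 ≤ ∫ z in ball 0 ρ₁, {z | r z ≤ 0}.indicator
        (fun z => Q (graphMk d z (m z)) t * omegaW d m z) z := by
  obtain ⟨c, hc0, hc⟩ := exists_omegaW_le hρ₁ hm
  have hγ := continuousOn_graphMk_graph hm.continuousOn
  have hω := continuousOn_omegaW hm
  obtain ⟨i1, c1⟩ := continuousOn_weighted_integral_comp hK hQ hγ hmK (c := M * c)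
    (w := fun z => -(r z * omegaW d m z)) (hr.neg.aestronglyMeasurable measurableSet_ball) (fun z hz => by
      rw [abs_neg, abs_mul, abs_of_pos (omegaW_pos d m z)]
      exact mul_le_mul (hrM z hz) (hc z hz) (omegaW_pos d m z).le hM)
  obtain ⟨i2, c2⟩ := continuousOn_weighted_integral_comp hK hQ hγ hmK (c := c)
    (aestronglyMeasurable_indicator_nonpos (r := r) (omegaW_pos d m) hω hr) (fun z hz => by
      by_cases h : z ∈ {z | r z ≤ 0}
      · rw [indicator_of_mem h, abs_of_pos (omegaW_pos d m z)]
        exact hc z hz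
      · rwa [indicator_of_notMem h, abs_zero])
  have e : ∀ t z, {z | r z ≤ 0}.indicator
      (fun z => Q (graphMk d z (m z)) t * omegaW d m z) z =
      {z | r z ≤ 0}.indicator (omegaW d m) z * Q (graphMk d z (m z)) t := fun t z => by
    by_cases h : z ∈ {z | r z ≤ 0}
    · rw [indicator_of_mem h, indicator_of_mem h, mul_comm]
    · rw [indicator_of_notMem h, indicator_of_notMem h, zero_mul]
  have e' := fun t => funext (e t)
  simp only [e']
  refine ⟨i1, i2, c1, c2, fun t ht => ?_, fun t ht => ?_⟩
  · rw [← integral_const_mul]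
    refine setIntegral_mono_on (i1 t ht) ((i2 t ht).const_mul M) measurableSet_ball fun z hz => ?_
    rw [← mul_assoc]
    exact mul_le_mul_of_nonneg_right
      (neg_mul_le_indicator_nonpos (omegaW_pos d m z) (hrM z hz)) (hQ0 _ (hmK hz) t ht)
  · exact setIntegral_nonneg measurableSet_ball fun z hz => mul_nonneg
      (indicator_nonneg (fun z _ => (omegaW_pos d m z).le) z) (hQ0 _ (hmK hz) t ht)

/-- Energy inequality for a nonnegative solution `Q` of a transport inequality in the domain
between two graphs. -/
theorem setIntegral_le_of_transport_inequality {ℓ ℓt : Esp d → ℝ} {T M t₀ : ℝ} (hρ₁ : 0 < ρ₁)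
    (hM : 0 ≤ M)
    (hℓ : ContDiffOn ℝ 1 ℓ (closedBall 0 ρ₁))
    (hℓt : ContDiffOn ℝ 1 ℓt (closedBall 0 ρ₁))
    (hpos : ∀ x' : Esp d, ‖x'‖ < ρ₁ → 0 < ℓt x')
    (hℓt0 : ∀ x' : Esp d, ‖x'‖ = ρ₁ → ℓt x' = 0)
    {U : Set (Esp (d+1))} (hU : IsOpen U) (hKU : closure (graphDomain d ρ₁ ℓ ℓt) ⊆ U)
    {H : Esp (d+1) → Esp (d+1)} (hH : ContDiffOn ℝ 1 H U) (hHM : ∀ x ∈ U, ‖H x‖ ≤ M)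
    (hDH : ∀ x ∈ U, ‖fderiv ℝ H x‖ ≤ M)
    {Q : Esp (d+1) → ℝ → ℝ}
    (hQc : ContinuousOn (fun q : Esp (d+1) × ℝ => Q q.1 q.2)
      (closure (graphDomain d ρ₁ ℓ ℓt) ×ˢ Icc 0 T))
    (hQd : ContDiffOn ℝ 1 (fun q : Esp (d+1) × ℝ => Q q.1 q.2)
      (graphDomain d ρ₁ ℓ ℓt ×ˢ Ioo 0 T))
    (hQ0 : ∀ x ∈ closure (graphDomain d ρ₁ ℓ ℓt), ∀ t ∈ Icc 0 T, 0 ≤ Q x t)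
    {F : Esp (d+1) → ℝ} (hF : ContinuousOn F (closure (graphDomain d ρ₁ ℓ ℓt)))
    (hF0 : ∀ x ∈ closure (graphDomain d ρ₁ ℓ ℓt), 0 ≤ F x)
    (hineq : ∀ x ∈ graphDomain d ρ₁ ℓ ℓt, ∀ t ∈ Ioo 0 T,
      fderiv ℝ (fun q : Esp (d+1) × ℝ => Q q.1 q.2) (x, t) (H x, 1) ≤
        F x - (d + 1 : ℕ) * M * Q x t)
    (ht₀ : t₀ ∈ Icc 0 T) :
    ∫ x in graphDomain d ρ₁ ℓ ℓt, Q x t₀ ≤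
      (∫ x in graphDomain d ρ₁ ℓ ℓt, Q x 0) + T * (∫ x in graphDomain d ρ₁ ℓ ℓt, F x) +
      M * ∫ t in Ioo 0 T, ∫ x' in ball (0 : Esp d) ρ₁,
        ({z' : Esp d | ⟪H (graphMk d z' (ℓ z')), nuUp d ℓ z'⟫ ≤ 0}.indicator
            (fun z' => Q (graphMk d z' (ℓ z')) t * omegaW d ℓ z') x'
          + {z' : Esp d |
              ⟪H (graphMk d z' (ℓ z' - ℓt z')), nuDown d (fun z => ℓ z - ℓt z) z'⟫
                ≤ 0}.indicator
            (fun z' => Q (graphMk d z' (ℓ z' - ℓt z')) t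
              * omegaW d (fun z => ℓ z - ℓt z) z') x') := by
  have hT : 0 ≤ T := ht₀.1.trans ht₀.2
  have hK := isCompact_closure_graphDomain hℓ.continuousOn hℓt.continuousOn
  have hD := isOpen_graphDomain hℓ.continuousOn hℓt.continuousOn
  set D := graphDomain d ρ₁ ℓ ℓt with hDdef
  set m : Esp d → ℝ := fun z => ℓ z - ℓt z with hmdef
  have hm : ContDiffOn ℝ 1 m (closedBall 0 ρ₁) := hℓ.sub hℓt
  have hHK : ContinuousOn H (closure D) := hH.continuousOn.mono hKU
  have hup : MapsTo (fun z => graphMk d z (ℓ z)) (ball 0 ρ₁) (closure D) := fun z hz =>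
    graphMk_mem_closure (mem_ball_zero_iff.1 hz) (hpos z (mem_ball_zero_iff.1 hz))
      ⟨by linarith [hpos z (mem_ball_zero_iff.1 hz)], le_rfl⟩
  have hdown : MapsTo (fun z => graphMk d z (m z)) (ball 0 ρ₁) (closure D) := fun z hz =>
    graphMk_mem_closure (mem_ball_zero_iff.1 hz) (hpos z (mem_ball_zero_iff.1 hz))
      ⟨le_rfl, by linarith [hpos z (mem_ball_zero_iff.1 hz)]⟩
  have cflux : ∀ {μ : Esp d → ℝ}, ContDiffOn ℝ 1 μ (closedBall 0 ρ₁) →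
      MapsTo (fun z => graphMk d z (μ z)) (ball 0 ρ₁) (closure D) →
      ContinuousOn (fun z => lastL d (H (graphMk d z (μ z))) -
        fderiv ℝ μ z (headL d (H (graphMk d z (μ z))))) (ball 0 ρ₁) := fun {μ} hμ hmaps => by
    have cH := hHK.comp (continuousOn_graphMk_graph hμ.continuousOn) hmaps
    exact ((lastL d).continuous.comp_continuousOn cH).sub
      ((continuousOn_fderiv_ball hμ).clm_apply ((headL d).continuous.comp_continuousOn cH))
  obtain ⟨ia, ib, ca, cb, la, lb⟩ := boundary_flux_le hρ₁ hM hℓ hK hup hQc hQ0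
    (r := fun z => ⟪H (graphMk d z (ℓ z)), nuUp d ℓ z⟫)
    (by simpa only [inner_nuUp_mul_omegaW] using cflux hℓ hup)
    (fun z hz => (abs_real_inner_le_norm _ _).trans
      (by rw [norm_nuUp, mul_one]; exact hHM _ (hKU (hup hz))))
  obtain ⟨ja, jb, da, db, ma, mb⟩ := boundary_flux_le hρ₁ hM hm hK hdown hQc hQ0
    (r := fun z => ⟪H (graphMk d z (m z)), nuDown d m z⟫)
    (by simpa only [inner_nuDown_mul_omegaW, neg_sub] using
      (cflux hm hdown).fun_neg)
    (fun z hz => (abs_real_inner_le_norm _ _).trans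
      (by rw [norm_nuDown, mul_one]; exact hHM _ (hKU (hdown hz))))
  obtain ⟨c, hc⟩ := (hK.prod isCompact_Icc).exists_bound_of_continuousOn hQc
  obtain ⟨A, hA⟩ := tendsto_integral_fderiv_graphCutoff hρ₁ hℓ hℓt hpos hℓt0 hHK c
  have cQt : ∀ t ∈ Icc 0 T, ContinuousOn (fun x => Q x t) (closure D) := fun t ht =>
    hQc.comp (continuousOn_id.prodMk continuousOn_const) fun x hx => ⟨hx, ht⟩
  have hAt := fun t (ht : t ∈ Icc 0 T) => hA (fun x => Q x t) (cQt t ht)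
    fun x hx => hc (x, t) ⟨hx, ht⟩
  have hon : ∀ {g : Esp (d+1) → ℝ}, ContinuousOn g (closure D) → IntegrableOn g D :=
    fun hg => (hg.integrableOn_compact hK).mono_set subset_closure
  have h0T : (0:ℝ) ∈ Icc 0 T := ⟨le_rfl, hT⟩
  -- cutoff integrals against nonnegative continuous functions
  have hsupp : ∀ ε > 0, tsupport (graphCutoff d ρ₁ ℓ ℓt ε) ⊆ D := fun ε hε =>
    (tsupport_graphCutoff_subset hℓ.continuousOn hℓt.continuousOn hε).trans
      (graphCore_subset hℓt0 hε)
  have hcut : ∀ ε > 0, ∀ g : Esp (d+1) → ℝ, ∫ x, graphCutoff d ρ₁ ℓ ℓt ε x * g x =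
      ∫ x in D, graphCutoff d ρ₁ ℓ ℓt ε x * g x := fun ε hε g => by
    refine (setIntegral_eq_integral_of_forall_compl_eq_zero fun x hx => ?_).symm
    rw [image_eq_zero_of_notMem_tsupport fun h => hx (hsupp ε hε h), zero_mul]
  have hcutint : ∀ ε > 0, ∀ {g : Esp (d+1) → ℝ}, ContinuousOn g (closure D) →
      IntegrableOn (fun x => graphCutoff d ρ₁ ℓ ℓt ε x * g x) D := fun ε hε g hg =>
    hon ((contDiff_graphCutoff hℓ hℓt hℓt0 hε).continuous.continuousOn.mul hg)
  have hcutle : ∀ ε > 0, ∀ {g : Esp (d+1) → ℝ}, ContinuousOn g (closure D) →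
      (∀ x ∈ closure D, 0 ≤ g x) →
      ∫ x, graphCutoff d ρ₁ ℓ ℓt ε x * g x ≤ ∫ x in D, g x := fun ε hε g hg hg0 => by
    rw [hcut ε hε]
    exact setIntegral_mono_on (hcutint ε hε hg) (hon hg) hD.measurableSet fun x hx =>
      mul_le_of_le_one_left (hg0 x (subset_closure hx)) (graphCutoff_le_one _ _ _ _ _ _)
  have hlim : Tendsto (fun ε => ∫ x, graphCutoff d ρ₁ ℓ ℓt ε x * Q x t₀) (𝓝[>] 0)
      (𝓝 (∫ x in D, Q x t₀)) := by
    refine Tendsto.congr' (f₁ := fun ε => ∫ x in D, graphCutoff d ρ₁ ℓ ℓt ε x * Q x t₀) ?_ ?_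
    · filter_upwards [self_mem_nhdsWithin] with ε hε using (hcut ε hε _).symm
    refine tendsto_integral_filter_of_dominated_convergence (fun x => ‖Q x t₀‖) ?_ ?_
      (hon (cQt t₀ ht₀)).norm ?_
    · filter_upwards [self_mem_nhdsWithin] with ε hε using
        (hcutint ε hε (cQt t₀ ht₀)).aestronglyMeasurable
    · refine Eventually.of_forall fun ε => Eventually.of_forall fun x => ?_
      rw [norm_mul, Real.norm_of_nonneg (graphCutoff_nonneg _ _ _ _ _ _)]
      exact mul_le_of_le_one_left (norm_nonneg _) (graphCutoff_le_one _ _ _ _ _ _)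
    · refine (ae_restrict_iff' hD.measurableSet).2 (Eventually.of_forall fun x hx => ?_)
      simpa using (tendsto_graphCutoff hx).mul_const (Q x t₀)
  have hsub : Ioc 0 t₀ ⊆ Icc 0 T := fun t ht => ⟨ht.1.le, ht.2.trans ht₀.2⟩
  have hflux : Tendsto (fun ε => ∫ t in (0:ℝ)..t₀, ∫ x,
      fderiv ℝ (graphCutoff d ρ₁ ℓ ℓt ε) x (H x) * Q x t) (𝓝[>] 0)
      (𝓝 (∫ t in (0:ℝ)..t₀, ∫ z in ball (0 : Esp d) ρ₁,
          (-(⟪H (graphMk d z (ℓ z)), nuUp d ℓ z⟫ * omegaW d ℓ z) * Q (graphMk d z (ℓ z)) t +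
            -(⟪H (graphMk d z (m z)), nuDown d m z⟫ *
              omegaW d m z) * Q (graphMk d z (m z)) t))) := by
    refine intervalIntegral.tendsto_integral_filter_of_dominated_convergence (fun _ => A) ?_ ?_
      intervalIntegrable_const ?_
    · filter_upwards [self_mem_nhdsWithin] with ε hε
      have hk := continuous_fderiv_apply_of_tsupport_subset hD (hHK.mono subset_closure)
        (contDiff_graphCutoff hℓ hℓt hℓt0 hε) (hsupp ε hε)
      have := continuousOn_integral_mul_of_tsupport_subset hD hK subset_closure hQc hk
        ((hasCompactSupport_graphCutoff hℓ.continuousOn hℓt.continuousOn hℓt0 hε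
          ).of_isClosed_subset (isClosed_tsupport _) tsupport_fderiv_apply_field_subset)
        (tsupport_fderiv_apply_field_subset.trans (hsupp ε hε))
      rw [uIoc_of_le ht₀.1]
      exact (this.mono hsub).aestronglyMeasurable measurableSet_Ioc
    · filter_upwards [self_mem_nhdsWithin] with ε hε
      refine Eventually.of_forall fun t ht => ?_
      rw [uIoc_of_le ht₀.1] at ht
      exact (hAt t (hsub ht)).1 ε hε
    · refine Eventually.of_forall fun t ht => ?_
      rw [uIoc_of_le ht₀.1] at ht
      exact (hAt t (hsub ht)).2
  have hmain : ∫ x in D, Q x t₀ ≤ (∫ x in D, Q x 0) + T * (∫ x in D, F x) +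
      ∫ t in (0:ℝ)..t₀, ∫ z in ball (0 : Esp d) ρ₁,
          (-(⟪H (graphMk d z (ℓ z)), nuUp d ℓ z⟫ * omegaW d ℓ z) * Q (graphMk d z (ℓ z)) t +
            -(⟪H (graphMk d z (m z)), nuDown d m z⟫ *
              omegaW d m z) * Q (graphMk d z (m z)) t) := by
    refine le_of_tendsto_of_tendsto hlim (hflux.const_add _) ?_
    filter_upwards [self_mem_nhdsWithin] with ε hε
    refine (integral_mul_le_of_transport_inequality hD hK subset_closure hU hKU hH hDH hQc hQd
      (fun x hx => hQ0 x (subset_closure hx)) hF hineq (contDiff_graphCutoff hℓ hℓt hℓt0 hε)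
      (hasCompactSupport_graphCutoff hℓ.continuousOn hℓt.continuousOn hℓt0 hε) (hsupp ε hε)
      (graphCutoff_nonneg _ _ _ _ _) ht₀).trans ?_
    gcongr
    · exact hcutle ε hε (cQt 0 h0T) fun x hx => hQ0 x hx 0 h0T
    · rw [hcut ε hε]
      exact setIntegral_nonneg hD.measurableSet fun x hx =>
        mul_nonneg (graphCutoff_nonneg _ _ _ _ _ _) (hF0 x (subset_closure hx))
    · exact ht₀.2
    · exact hcutle ε hε hF hF0
  refine hmain.trans (add_le_add_right ?_ _)
  refine intervalIntegral_le_mul_setIntegral hM ht₀ ((ca.add da).congr fun t ht => ?_)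
    ((cb.add db).congr fun t ht => ?_) (fun t ht => ?_) fun t ht => ?_
  · exact integral_add (ia t ht) (ja t ht)
  · exact integral_add (ib t ht) (jb t ht)
  · rw [integral_add (ia t ht) (ja t ht)]
    refine (add_le_add (la t ht) (ma t ht)).trans_eq ?_
    rw [← mul_add]
    exact congrArg (M * ·) (integral_add (ib t ht) (jb t ht)).symm
  · exact (add_nonneg (lb t ht) (mb t ht)).trans_eq (integral_add (ib t ht) (jb t ht)).symm

end Energy

section TimeDerivative

variable {n : ℕ} {K D : Set (Esp n)} {T : ℝ} {Y : Esp n → ℝ → ℝ}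

theorem HasFDerivWithinAt.hasDerivWithinAt_slice {x : Esp n} {t : ℝ} {A : Esp n × ℝ →L[ℝ] ℝ}
    (h : HasFDerivWithinAt (fun q : Esp n × ℝ => Y q.1 q.2) A (K ×ˢ Icc 0 T) (x, t))
    (hx : x ∈ K) : HasDerivWithinAt (Y x) (A (0, 1)) (Icc 0 T) t := by
  have h1 : HasDerivWithinAt (fun s : ℝ => (x, s)) ((0 : Esp n), (1:ℝ)) (Icc 0 T) t :=
    (hasDerivWithinAt_const _ _ _).prodMk (hasDerivWithinAt_id _ _)
  exact h.comp_hasDerivWithinAt t h1 fun s hs => ⟨hx, hs⟩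

theorem differentiableOn_slice (hY : ContDiffOn ℝ 1 (fun q : Esp n × ℝ => Y q.1 q.2) (K ×ˢ Icc 0 T))
    {x : Esp n} (hx : x ∈ K) : DifferentiableOn ℝ (Y x) (Icc 0 T) := fun t ht =>
  (((hY.differentiableOn one_ne_zero (x, t) ⟨hx, ht⟩).hasFDerivWithinAt).hasDerivWithinAt_slice
    hx).differentiableWithinAt

/-- The time derivative of a `C¹` function is continuous up to the boundary, without any regularity
of the spatial domain. -/
theorem continuousOn_derivWithin_slice (hT : 0 < T)
    (hY : ContDiffOn ℝ 1 (fun q : Esp n × ℝ => Y q.1 q.2) (K ×ˢ Icc 0 T)) :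
    ContinuousOn (fun q : Esp n × ℝ => derivWithin (Y q.1) (Icc 0 T) q.2) (K ×ˢ Icc 0 T) := by
  intro q₀ hq₀
  have h := hY q₀ hq₀
  rw [show (1 : WithTop ℕ∞) = 0 + 1 from (zero_add 1).symm,
    contDiffWithinAt_succ_iff_hasFDerivWithinAt' (by simp)] at h
  obtain ⟨u, hu, -, -, A, hA, hAc⟩ := h
  rw [insert_eq_of_mem hq₀] at hu
  have e : ∀ q ∈ u ∩ K ×ˢ Icc 0 T, derivWithin (Y q.1) (Icc 0 T) q.2 = A q (0, 1) :=
    fun q hq => ((hA q hq.1).hasDerivWithinAt_slice hq.2.1).derivWithin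
      (uniqueDiffOn_Icc hT q.2 hq.2.2)
  have c : ContinuousWithinAt (fun q => A q (0, 1)) (K ×ˢ Icc 0 T) q₀ :=
    hAc.continuousWithinAt.clm_apply continuousWithinAt_const
  refine c.congr_of_eventuallyEq ?_ (e q₀ ⟨mem_of_mem_nhdsWithin hq₀ hu, hq₀⟩)
  filter_upwards [hu, self_mem_nhdsWithin] with q h1 h2 using e q ⟨h1, h2⟩

theorem derivWithin_slice_eq_fderiv {x : Esp n} {t : ℝ}
    (hY : DifferentiableAt ℝ (fun q : Esp n × ℝ => Y q.1 q.2) (x, t)) (ht : t ∈ Ioo 0 T) :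
    derivWithin (Y x) (Icc 0 T) t = fderiv ℝ (fun q : Esp n × ℝ => Y q.1 q.2) (x, t) (0, 1) := by
  have h1 : HasDerivAt (fun s : ℝ => (x, s)) ((0 : Esp n), (1:ℝ)) t :=
    (hasDerivAt_const _ _).prodMk (hasDerivAt_id _)
  rw [derivWithin_of_mem_nhds (Icc_mem_nhds ht.1 ht.2)]
  exact (hY.hasFDerivAt.comp_hasDerivAt t h1).deriv

theorem inner_gradient_slice {x h : Esp n} {t : ℝ}
    (hY : DifferentiableAt ℝ (fun q : Esp n × ℝ => Y q.1 q.2) (x, t)) :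
    ⟪h, gradient (fun z => Y z t) x⟫ =
      fderiv ℝ (fun q : Esp n × ℝ => Y q.1 q.2) (x, t) (h, 0) := by
  have h1 : HasFDerivAt (fun z : Esp n => (z, t)) (ContinuousLinearMap.inl ℝ (Esp n) ℝ) x :=
    hasFDerivAt_prodMk_left x t
  have h2 : fderiv ℝ (fun z => Y z t) x = (fderiv ℝ (fun q : Esp n × ℝ => Y q.1 q.2) (x, t)).comp
      (ContinuousLinearMap.inl ℝ (Esp n) ℝ) := by
    have h3 := hY.hasFDerivAt.comp x h1
    exact h3.fderiv
  rw [gradient, real_inner_comm, InnerProductSpace.toDual_symm_apply, h2]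
  simp

theorem hasDerivAt_fderiv_slice {G : Esp n × ℝ → ℝ} {x : Esp n} {t : ℝ}
    (hG : ContDiffAt ℝ 2 G (x, t)) (w : Esp n × ℝ) :
    HasDerivAt (fun s => fderiv ℝ G (x, s) w)
      (fderiv ℝ (fun q => fderiv ℝ G q (0, 1)) (x, t) w) t := by
  have hd : DifferentiableAt ℝ (fderiv ℝ G) (x, t) :=
    (hG.fderiv_right (m := 1) (by norm_num)).differentiableAt one_ne_zero
  have h1 : HasDerivAt (fun s : ℝ => (x, s)) ((0 : Esp n), (1:ℝ)) t :=
    (hasDerivAt_const _ _).prodMk (hasDerivAt_id _)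
  have hsymm : IsSymmSndFDerivAt ℝ G (x, t) := hG.isSymmSndFDerivAt (by simp)
  have e : fderiv ℝ (fun q => fderiv ℝ G q (0, 1)) (x, t) w =
      fderiv ℝ (fderiv ℝ G) (x, t) (0, 1) w := by
    rw [fderiv_clm_apply hd (differentiableAt_const _)]
    simpa using hsymm.eq w (0, 1)
  rw [e]
  exact ((ContinuousLinearMap.apply ℝ ℝ w).hasFDerivAt.comp_hasDerivAt t
    (hd.hasFDerivAt.comp_hasDerivAt t h1))

variable {H : Esp n → Esp n} {p f : Esp n → ℝ} {R : Esp n → ℝ → ℝ}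

/-- The time derivative of a `C²` solution of the transport equation solves the differentiated
equation. -/
theorem derivWithin_slice_transport (hD : IsOpen D)
    (hY : ContDiffOn ℝ 2 (fun q : Esp n × ℝ => Y q.1 q.2) (D ×ˢ Ioo 0 T))
    (hR : ∀ x ∈ D, DifferentiableOn ℝ (R x) (Icc 0 T))
    (hpde : ∀ x ∈ D, ∀ t ∈ Ioo (0:ℝ) T,
      deriv (Y x) t + ⟪H x, gradient (fun z => Y z t) x⟫ + p x * Y x t = R x t * f x) :
    ContDiffOn ℝ 1 (fun q : Esp n × ℝ => derivWithin (Y q.1) (Icc 0 T) q.2) (D ×ˢ Ioo 0 T) ∧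
    ∀ x ∈ D, ∀ t ∈ Ioo (0:ℝ) T,
      fderiv ℝ (fun q : Esp n × ℝ => derivWithin (Y q.1) (Icc 0 T) q.2) (x, t) (H x, 1) =
        derivWithin (R x) (Icc 0 T) t * f x - p x * derivWithin (Y x) (Icc 0 T) t := by
  have hO : IsOpen (D ×ˢ Ioo (0:ℝ) T) := hD.prod isOpen_Ioo
  set G : Esp n × ℝ → ℝ := fun q => Y q.1 q.2
  have hdiff : ∀ q ∈ D ×ˢ Ioo (0:ℝ) T, DifferentiableAt ℝ G q := fun q hq =>
    (hY.contDiffAt (hO.mem_nhds hq)).differentiableAt two_ne_zero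
  have e : EqOn (fun q : Esp n × ℝ => derivWithin (Y q.1) (Icc 0 T) q.2)
      (fun q => fderiv ℝ G q (0, 1)) (D ×ˢ Ioo 0 T) := fun q hq =>
    derivWithin_slice_eq_fderiv (hdiff q hq) hq.2
  refine ⟨ContDiffOn.congr ((hY.fderiv_of_isOpen hO (by norm_num)).clm_apply contDiffOn_const) e,
    fun x hx t ht => ?_⟩
  have hq : (x, t) ∈ D ×ˢ Ioo (0:ℝ) T := ⟨hx, ht⟩
  have ee := e.eventuallyEq_of_mem (hO.mem_nhds hq)
  rw [ee.fderiv_eq]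
  have h1 := hasDerivAt_fderiv_slice (hY.contDiffAt (hO.mem_nhds hq)) (H x, 1)
  have hslice : ∀ s ∈ Ioo (0:ℝ) T, HasDerivAt (Y x) (derivWithin (Y x) (Icc 0 T) s) s :=
    fun s hs => by
      have h2 : HasDerivAt (fun s : ℝ => (x, s)) ((0 : Esp n), (1:ℝ)) s :=
        (hasDerivAt_const _ _).prodMk (hasDerivAt_id _)
      have h3 := (hdiff (x, s) ⟨hx, hs⟩).hasFDerivAt.comp_hasDerivAt s h2
      rwa [← derivWithin_slice_eq_fderiv (hdiff (x, s) ⟨hx, hs⟩) hs] at h3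
  have hR' : HasDerivAt (R x) (derivWithin (R x) (Icc 0 T) t) t :=
    (hR x hx t (Ioo_subset_Icc_self ht)).hasDerivWithinAt.hasDerivAt (Icc_mem_nhds ht.1 ht.2)
  have h4 := (hR'.mul_const (f x)).sub ((hslice t ht).const_mul (p x))
  refine h1.unique (h4.congr_of_eventuallyEq ?_)
  filter_upwards [isOpen_Ioo.mem_nhds ht] with s hs
  have hds := hdiff (x, s) ⟨hx, hs⟩
  have := hpde x hx s hs
  rw [inner_gradient_slice hds, (hslice s hs).deriv, derivWithin_slice_eq_fderiv hds hs,
    ← map_add] at this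
  simp only [Prod.mk_add_mk, zero_add, add_zero] at this
  exact eq_sub_of_add_eq this

theorem derivWithin_slice_zero (hT : 0 < T) (hD : IsOpen D)
    (hY : ContDiffOn ℝ 2 (fun q : Esp n × ℝ => Y q.1 q.2) (D ×ˢ Icc 0 T))
    (hR : ∀ x ∈ D, DifferentiableOn ℝ (R x) (Icc 0 T))
    (hpde : ∀ x ∈ D, ∀ t ∈ Ioo (0:ℝ) T,
      deriv (Y x) t + ⟪H x, gradient (fun z => Y z t) x⟫ + p x * Y x t = R x t * f x)
    (hY0 : ∀ x ∈ D, Y x 0 = 0) {x : Esp n} (hx : x ∈ D) :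
    derivWithin (Y x) (Icc 0 T) 0 = R x 0 * f x := by
  have h0 : (0:ℝ) ∈ Icc 0 T := ⟨le_rfl, hT.le⟩
  set G : Esp n × ℝ → ℝ := fun q => Y q.1 q.2 with hG
  have hu : UniqueDiffOn ℝ (D ×ˢ Icc (0:ℝ) T) := hD.uniqueDiffOn.prod (uniqueDiffOn_Icc hT)
  have hA := hY.continuousOn_fderivWithin hu (by norm_num)
  have hd := hY.differentiableOn two_ne_zero
  have hsl : ContinuousOn (fun t : ℝ => (x, t)) (Icc 0 T) := by fun_prop
  have hmaps : MapsTo (fun t : ℝ => (x, t)) (Icc 0 T) (D ×ˢ Icc 0 T) := fun t ht => ⟨hx, ht⟩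
  have c1 : ContinuousOn (fun t => fderivWithin ℝ G (D ×ˢ Icc 0 T) (x, t) (H x, 1) + p x * Y x t)
      (Icc 0 T) :=
    ((hA.comp hsl hmaps).clm_apply continuousOn_const).add
      (continuousOn_const.mul (hY.continuousOn.comp hsl hmaps))
  have c2 : ContinuousOn (fun t => R x t * f x) (Icc 0 T) :=
    (hR x hx).continuousOn.mul continuousOn_const
  have e : EqOn (fun t => fderivWithin ℝ G (D ×ˢ Icc 0 T) (x, t) (H x, 1) + p x * Y x t)
      (fun t => R x t * f x) (Ioo 0 T) := fun t ht => by
    have hnb : D ×ˢ Icc (0:ℝ) T ∈ 𝓝 (x, t) :=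
      prod_mem_nhds (hD.mem_nhds hx) (Icc_mem_nhds ht.1 ht.2)
    have hdt : DifferentiableAt ℝ G (x, t) := (hY.contDiffAt hnb).differentiableAt two_ne_zero
    have := hpde x hx t ht
    rw [inner_gradient_slice hdt, ← derivWithin_of_mem_nhds (Icc_mem_nhds ht.1 ht.2),
      derivWithin_slice_eq_fderiv hdt ht, ← map_add] at this
    simp only [Prod.mk_add_mk, zero_add, add_zero] at this
    simpa only [fderivWithin_of_mem_nhds hnb] using this
  have e0 := e.of_subset_closure c1 c2 Ioo_subset_Icc_self (by rw [closure_Ioo hT.ne]) h0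
  have hfd := (hd (x, 0) ⟨hx, h0⟩).hasFDerivWithinAt
  have hx0 : fderivWithin ℝ G (D ×ˢ Icc 0 T) (x, 0) (H x, 0) = 0 := by
    have h1 : HasFDerivWithinAt (fun z : Esp n => (z, (0:ℝ)))
        (ContinuousLinearMap.inl ℝ (Esp n) ℝ) D x :=
      (hasFDerivAt_prodMk_left x (0:ℝ)).hasFDerivWithinAt
    have hm : MapsTo (fun z : Esp n => (z, (0:ℝ))) D (D ×ˢ Icc 0 T) := fun z hz => ⟨hz, h0⟩
    have h2 := (hfd.comp x h1 hm).hasFDerivAt (hD.mem_nhds hx)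
    have h3 : HasFDerivAt (fun _ : Esp n => (0:ℝ)) (0 : Esp n →L[ℝ] ℝ) x := hasFDerivAt_const _ _
    have h4 := h2.unique (h3.congr_of_eventuallyEq (by
      filter_upwards [hD.mem_nhds hx] with z hz using hY0 z hz))
    simpa using congrArg (fun A => A (H x)) h4
  have hsum : fderivWithin ℝ G (D ×ˢ Icc 0 T) (x, 0) (H x, 1) =
      fderivWithin ℝ G (D ×ˢ Icc 0 T) (x, 0) (H x, 0) +
        fderivWithin ℝ G (D ×ˢ Icc 0 T) (x, 0) (0, 1) := by
    rw [← map_add]; simp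
  simp only [hsum, hx0, hY0 x hx, mul_zero, add_zero, zero_add] at e0
  rw [← e0]
  exact (hfd.hasDerivWithinAt_slice hx).derivWithin (uniqueDiffOn_Icc hT 0 h0)

end TimeDerivative

/-- Pointwise inequality for the exponentially weighted square of a solution of a transport
equation with zeroth order coefficient bounded by `M`. -/
theorem weighted_sq_transport_le {n : ℕ} {v : Esp n × ℝ → ℝ} {x h : Esp n} {t M k a p g Λ : ℝ}
    (ht : 0 ≤ t) (hv : DifferentiableAt ℝ v (x, t)) (hp : |p| ≤ M) (hg : |g| ≤ k)
    (hΛ : 1 + 2 * M + n * M ≤ Λ) (hvt : fderiv ℝ v (x, t) (h, 1) = g * a - p * v (x, t)) :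
    fderiv ℝ (fun q : Esp n × ℝ => Real.exp (-(Λ * q.2)) * v q ^ 2) (x, t) (h, 1) ≤
      k ^ 2 * a ^ 2 - n * M * (Real.exp (-(Λ * t)) * v (x, t) ^ 2) := by
  have h1 : HasFDerivAt (fun q : Esp n × ℝ => -(Λ * q.2))
      (-(Λ • ContinuousLinearMap.snd ℝ (Esp n) ℝ)) (x, t) :=
    (hasFDerivAt_snd.const_mul Λ).neg
  have h2 := h1.exp.mul (hv.hasFDerivAt.pow 2)
  have e : fderiv ℝ (fun q : Esp n × ℝ => Real.exp (-(Λ * q.2)) * v q ^ 2) (x, t) (h, 1) =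
      Real.exp (-(Λ * t)) * (2 * v (x, t) * (g * a - p * v (x, t)) - Λ * v (x, t) ^ 2) := by
    refine (congrArg (fun A => A (h, (1:ℝ))) h2.fderiv).trans ?_
    simp [hvt]
    ring
  rw [e]
  set w := v (x, t)
  have hE0 := Real.exp_pos (-(Λ * t))
  have hM0 : 0 ≤ M := (abs_nonneg _).trans hp
  have hΛ0 : 0 ≤ Λ := le_trans (by positivity) hΛ
  have hE1 : Real.exp (-(Λ * t)) ≤ 1 := Real.exp_le_one_iff.2 (by nlinarith [mul_nonneg hΛ0 ht])
  have b1 : 2 * w * (g * a) ≤ w ^ 2 + k ^ 2 * a ^ 2 := by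
    have : g ^ 2 ≤ k ^ 2 := sq_le_sq' (abs_le.1 hg).1 (abs_le.1 hg).2
    nlinarith [sq_nonneg (w - g * a), mul_le_mul_of_nonneg_right this (sq_nonneg a)]
  have b2 : -(2 * p * w ^ 2) ≤ 2 * M * w ^ 2 := by
    nlinarith [sq_nonneg w, (abs_le.1 hp).1]
  have b3 : (1 + 2 * M + n * M) * w ^ 2 ≤ Λ * w ^ 2 :=
    mul_le_mul_of_nonneg_right hΛ (sq_nonneg w)
  have b4 : 2 * w * (g * a - p * w) - Λ * w ^ 2 ≤ k ^ 2 * a ^ 2 - n * M * w ^ 2 := by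
    nlinarith
  have b5 : Real.exp (-(Λ * t)) * (k ^ 2 * a ^ 2) ≤ k ^ 2 * a ^ 2 :=
    mul_le_of_le_one_left (by positivity) hE1
  nlinarith [mul_le_mul_of_nonneg_left b4 hE0.le]

theorem sq_deriv_le_sq_derivWithin {g : ℝ → ℝ} {s : Set ℝ} {t : ℝ}
    (hs : UniqueDiffWithinAt ℝ s t) : deriv g t ^ 2 ≤ derivWithin g s t ^ 2 := by
  by_cases h : DifferentiableAt ℝ g t
  · rw [h.derivWithin hs]
  · rw [deriv_zero_of_not_differentiableAt h, zero_pow two_ne_zero]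
    exact sq_nonneg _

theorem setIntegral_exp_neg_mul_le {B : ℝ → ℝ} {Λ T : ℝ} (hB : ∀ t, 0 ≤ B t) (hΛ : 0 ≤ Λ) :
    ∫ t in Ioo 0 T, Real.exp (-(Λ * t)) * B t ≤ ∫ t in Ioo 0 T, B t := by
  by_cases h : IntegrableOn B (Ioo 0 T)
  · refine integral_mono_of_nonneg (Eventually.of_forall fun t =>
      mul_nonneg (Real.exp_pos _).le (hB t)) h ?_
    refine (ae_restrict_iff' measurableSet_Ioo).2 (Eventually.of_forall fun t ht => ?_)
    exact mul_le_of_le_one_left (hB t)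
      (Real.exp_le_one_iff.2 (neg_nonpos.2 (mul_nonneg hΛ ht.1.le)))
  · rw [integral_undef h, integral_undef]
    intro h'
    refine h ?_
    have hc : ContinuousOn (fun t => Real.exp (Λ * t)) (Icc 0 T) := by fun_prop
    have h2 := IntegrableOn.continuousOn_mul hc (integrableOn_Icc_iff_integrableOn_Ioo enorm_ne_top
      enorm_ne_top |>.2 h') isCompact_Icc
    refine (h2.mono_set Ioo_subset_Icc_self).congr_fun (fun t _ => ?_)
      measurableSet_Ioo
    simp [← mul_assoc, ← Real.exp_add]

theorem sqrt_add_le_add_sqrt {a b : ℝ} (ha : 0 ≤ a) (hb : 0 ≤ b) : √(a + b) ≤ √a + √b := by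
  rw [Real.sqrt_le_left (by positivity), add_sq, Real.sq_sqrt ha, Real.sq_sqrt hb]
  nlinarith [mul_nonneg (Real.sqrt_nonneg a) (Real.sqrt_nonneg b)]

/-- **Lemma 3** (energy estimate). -/
theorem lemma3_energy_estimate
    (d : ℕ) (hd : 1 ≤ d) (T M δ₀ ρ₁ : ℝ)
    (hT : 0 < T) (hM : 0 < M) (hδ₀ : 0 < δ₀) (hρ₁ : 0 < ρ₁)
    (ℓ ℓt : Esp d → ℝ)
    (hℓ : ContDiffOn ℝ 2 ℓ (closedBall 0 ρ₁))
    (hℓt : ContDiffOn ℝ 2 ℓt (closedBall 0 ρ₁))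
    (hℓtpos : ∀ x' : Esp d, ‖x'‖ < ρ₁ → 0 < ℓt x')
    (hℓt0 : ∀ x' : Esp d, ‖x'‖ = ρ₁ → ℓt x' = 0)
    (R : Esp (d+1) → ℝ → ℝ)
    (hR : ContDiffOn ℝ 2 (fun q : Esp (d+1) × ℝ => R q.1 q.2)
      (closure (graphDomain d ρ₁ ℓ ℓt) ×ˢ Icc 0 T))
    (H : Esp (d+1) → Esp (d+1))
    (hH : IsAdmissible M δ₀ (closure (graphDomain d ρ₁ ℓ ℓt)) H)
    (p₁ : Esp (d+1) → ℝ) (hp₁ : ContinuousOn p₁ (closure (graphDomain d ρ₁ ℓ ℓt)))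
    (hp₁b : ∀ x ∈ closure (graphDomain d ρ₁ ℓ ℓt), |p₁ x| ≤ M)
 :
    ∃ C > (0:ℝ),
      ∀ (f : Esp (d+1) → ℝ) (y : Esp (d+1) → ℝ → ℝ),
        ContinuousOn f (closure (graphDomain d ρ₁ ℓ ℓt)) →
        ContDiffOn ℝ 2 (fun q : Esp (d+1) × ℝ => y q.1 q.2)
          (closure (graphDomain d ρ₁ ℓ ℓt) ×ˢ Icc 0 T) →
        (∀ x ∈ graphDomain d ρ₁ ℓ ℓt, ∀ t ∈ Ioo (0:ℝ) T,
          deriv (y x) t + ⟪H x, gradient (fun z => y z t) x⟫ + p₁ x * y x t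
            = R x t * f x) →
        (∀ x ∈ graphDomain d ρ₁ ℓ ℓt, y x 0 = 0) →
        ∀ t₀ ∈ Icc (0:ℝ) T,
        Real.sqrt (∫ x in graphDomain d ρ₁ ℓ ℓt, (deriv (y x) t₀) ^ 2)
        ≤ C * (Real.sqrt (∫ x in graphDomain d ρ₁ ℓ ℓt, (f x) ^ 2)
          + Real.sqrt (∫ t in Ioo 0 T, ∫ x' in ball (0 : Esp d) ρ₁,
              ({z' : Esp d | ⟪H (graphMk d z' (ℓ z')), nuUp d ℓ z'⟫ ≤ 0}.indicator
                  (fun z' =>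
                    (deriv (y (graphMk d z' (ℓ z'))) t) ^ 2 * omegaW d ℓ z') x'
                + {z' : Esp d |
                    ⟪H (graphMk d z' (ℓ z' - ℓt z')), nuDown d (fun z => ℓ z - ℓt z) z'⟫
                      ≤ 0}.indicator
                  (fun z' =>
                    (deriv (y (graphMk d z' (ℓ z' - ℓt z'))) t) ^ 2
                      * omegaW d (fun z => ℓ z - ℓt z) z') x'))) := by
  obtain ⟨U, hU, -, hKU, hHd, hHM, hDH, -⟩ := hH
  have hℓ1 : ContDiffOn ℝ 1 ℓ (closedBall 0 ρ₁) := hℓ.of_le (by norm_num)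
  have hℓt1 : ContDiffOn ℝ 1 ℓt (closedBall 0 ρ₁) := hℓt.of_le (by norm_num)
  have hK := isCompact_closure_graphDomain hℓ.continuousOn hℓt.continuousOn
  have hD := isOpen_graphDomain hℓ.continuousOn hℓt.continuousOn
  set D := graphDomain d ρ₁ ℓ ℓt with hDdef
  have h0T : (0:ℝ) ∈ Icc 0 T := ⟨le_rfl, hT.le⟩
  have hR1 : ContDiffOn ℝ 1 (fun q : Esp (d+1) × ℝ => R q.1 q.2) (closure D ×ˢ Icc 0 T) :=
    hR.of_le (by norm_num)
  have hRs : ∀ x ∈ D, DifferentiableOn ℝ (R x) (Icc 0 T) := fun x hx =>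
    differentiableOn_slice hR1 (subset_closure hx)
  obtain ⟨k₀, hk₀⟩ := (hK.prod isCompact_Icc).exists_bound_of_continuousOn hR.continuousOn
  obtain ⟨k, hk⟩ := (hK.prod isCompact_Icc).exists_bound_of_continuousOn
    (continuousOn_derivWithin_slice hT hR1)
  set Λ : ℝ := 1 + 2 * M + (d + 1 : ℕ) * M with hΛ
  have hΛ0 : 0 ≤ Λ := by positivity
  set N : ℝ := Real.exp (Λ * T) * (k₀ ^ 2 + T * k ^ 2 + M) with hN
  have hN0 : 0 < N := by positivity
  refine ⟨√N, Real.sqrt_pos.2 hN0, fun f y hf hy hpde hy0 t₀ ht₀ => ?_⟩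
  have hy1 : ContDiffOn ℝ 1 (fun q : Esp (d+1) × ℝ => y q.1 q.2) (closure D ×ˢ Icc 0 T) :=
    hy.of_le (by norm_num)
  set v : Esp (d+1) → ℝ → ℝ := fun x t => derivWithin (y x) (Icc 0 T) t with hv
  have hvc : ContinuousOn (fun q : Esp (d+1) × ℝ => v q.1 q.2) (closure D ×ˢ Icc 0 T) :=
    continuousOn_derivWithin_slice hT hy1
  obtain ⟨hvd, hvt⟩ := derivWithin_slice_transport hD
    (hy.mono (prod_mono subset_closure Ioo_subset_Icc_self)) hRs hpde
  have hv0 : ∀ x ∈ D, v x 0 = R x 0 * f x := fun x hx =>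
    derivWithin_slice_zero hT hD (hy.mono (prod_mono subset_closure le_rfl)) hRs hpde hy0 hx
  set Q : Esp (d+1) → ℝ → ℝ := fun x t => Real.exp (-(Λ * t)) * v x t ^ 2 with hQ
  have hexp : ContDiff ℝ 1 fun q : Esp (d+1) × ℝ => Real.exp (-(Λ * q.2)) := by fun_prop
  have hEle : ∀ t ∈ Icc 0 T, Real.exp (-(Λ * t)) ≤ 1 := fun t ht =>
    Real.exp_le_one_iff.2 (neg_nonpos.2 (mul_nonneg hΛ0 ht.1))
  have hQv : ∀ x, ∀ t ∈ Icc 0 T, Q x t ≤ v x t ^ 2 := fun x t ht =>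
    mul_le_of_le_one_left (sq_nonneg _) (hEle t ht)
  have hvQ : ∀ x, ∀ t ∈ Icc 0 T, v x t ^ 2 ≤ Real.exp (Λ * T) * Q x t := fun x t ht => by
    rw [hQ]
    simp only
    rw [← mul_assoc, ← Real.exp_add]
    refine le_mul_of_one_le_left (sq_nonneg _) (Real.one_le_exp ?_)
    nlinarith [mul_le_mul_of_nonneg_left ht.2 hΛ0]
  have hQc : ContinuousOn (fun q : Esp (d+1) × ℝ => Q q.1 q.2) (closure D ×ˢ Icc 0 T) :=
    hexp.continuous.continuousOn.mul (hvc.pow 2)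
  have hQ0 : ∀ x ∈ closure D, ∀ t ∈ Icc 0 T, 0 ≤ Q x t := fun x _ t _ => by positivity
  have key := setIntegral_le_of_transport_inequality hρ₁ hM.le hℓ1 hℓt1 hℓtpos hℓt0 hU hKU hHd
    hHM hDH hQc (hexp.contDiffOn.mul (hvd.pow 2)) hQ0
    (F := fun x => k ^ 2 * f x ^ 2) (continuousOn_const.mul (hf.pow 2))
    (fun x _ => by positivity) (fun x hx t ht => by
      have hO : D ×ˢ Ioo (0:ℝ) T ∈ 𝓝 (x, t) := (hD.prod isOpen_Ioo).mem_nhds ⟨hx, ht⟩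
      exact weighted_sq_transport_le ht.1.le
        ((hvd.contDiffAt hO).differentiableAt one_ne_zero) (hp₁b x (subset_closure hx))
        (hk (x, t) ⟨subset_closure hx, Ioo_subset_Icc_self ht⟩) le_rfl (hvt x hx t ht)) ht₀
  have cslice : ∀ {g : Esp (d+1) → ℝ → ℝ},
      ContinuousOn (fun q : Esp (d+1) × ℝ => g q.1 q.2) (closure D ×ˢ Icc 0 T) →
      ∀ t ∈ Icc 0 T, ContinuousOn (fun x => g x t) (closure D) := fun hg t ht =>
    hg.comp (continuousOn_id.prodMk continuousOn_const) fun x hx => ⟨hx, ht⟩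
  have hon : ∀ {g : Esp (d+1) → ℝ}, ContinuousOn g (closure D) → IntegrableOn g D :=
    fun hg => (hg.integrableOn_compact hK).mono_set subset_closure
  have hlhs : ∫ x in D, deriv (y x) t₀ ^ 2 ≤ Real.exp (Λ * T) * ∫ x in D, Q x t₀ := by
    rw [← integral_const_mul]
    refine integral_mono_of_nonneg (Eventually.of_forall fun x => sq_nonneg _)
      ((hon (cslice hQc t₀ ht₀)).const_mul _) (Eventually.of_forall fun x => ?_)
    exact (sq_deriv_le_sq_derivWithin (uniqueDiffOn_Icc hT t₀ ht₀)).trans (hvQ x t₀ ht₀)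
  have hinit : ∫ x in D, Q x 0 ≤ k₀ ^ 2 * ∫ x in D, f x ^ 2 := by
    rw [← integral_const_mul]
    refine setIntegral_mono_on (hon (cslice hQc 0 h0T)) ((hon (hf.pow 2)).const_mul _)
      hD.measurableSet fun x hx => ?_
    refine (hQv x 0 h0T).trans ?_
    rw [hv0 x hx, mul_pow]
    have := hk₀ (x, 0) ⟨subset_closure hx, h0T⟩
    exact mul_le_mul_of_nonneg_right (sq_le_sq' (abs_le.1 this).1 (abs_le.1 this).2)
      (sq_nonneg _)
  set B : ℝ → ℝ := fun t => ∫ x' in ball (0 : Esp d) ρ₁,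
    ({z' : Esp d | ⟪H (graphMk d z' (ℓ z')), nuUp d ℓ z'⟫ ≤ 0}.indicator
        (fun z' => (deriv (y (graphMk d z' (ℓ z'))) t) ^ 2 * omegaW d ℓ z') x'
      + {z' : Esp d |
          ⟪H (graphMk d z' (ℓ z' - ℓt z')), nuDown d (fun z => ℓ z - ℓt z) z'⟫ ≤ 0}.indicator
        (fun z' => (deriv (y (graphMk d z' (ℓ z' - ℓt z'))) t) ^ 2
          * omegaW d (fun z => ℓ z - ℓt z) z') x') with hBdef
  have hB0 : ∀ t, 0 ≤ B t := fun t => integral_nonneg fun x' => add_nonneg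
    (indicator_nonneg (fun z _ => mul_nonneg (sq_nonneg _) (omegaW_pos d _ z).le) x')
    (indicator_nonneg (fun z _ => mul_nonneg (sq_nonneg _) (omegaW_pos d _ z).le) x')
  have hBQ : ∫ t in Ioo 0 T, ∫ x' in ball (0 : Esp d) ρ₁,
        ({z' : Esp d | ⟪H (graphMk d z' (ℓ z')), nuUp d ℓ z'⟫ ≤ 0}.indicator
            (fun z' => Q (graphMk d z' (ℓ z')) t * omegaW d ℓ z') x'
          + {z' : Esp d |
              ⟪H (graphMk d z' (ℓ z' - ℓt z')), nuDown d (fun z => ℓ z - ℓt z) z'⟫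
                ≤ 0}.indicator
            (fun z' => Q (graphMk d z' (ℓ z' - ℓt z')) t
              * omegaW d (fun z => ℓ z - ℓt z) z') x') ≤ ∫ t in Ioo 0 T, B t := by
    refine (setIntegral_congr_fun measurableSet_Ioo fun t ht => ?_).trans_le
      (setIntegral_exp_neg_mul_le hB0 hΛ0)
    rw [hBdef]
    simp only
    rw [← integral_const_mul]
    refine integral_congr_ae (Eventually.of_forall fun x' => ?_)
    simp only [hQ, hv, derivWithin_of_mem_nhds (Icc_mem_nhds ht.1 ht.2), mul_add, mul_assoc,
      indicator_const_mul]
  have hf0 : 0 ≤ ∫ x in D, f x ^ 2 := integral_nonneg fun x => sq_nonneg _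
  have hI0 : 0 ≤ ∫ t in Ioo 0 T, B t := integral_nonneg hB0
  have hF : ∫ x in D, k ^ 2 * f x ^ 2 = k ^ 2 * ∫ x in D, f x ^ 2 := integral_const_mul _ _
  rw [hF] at key
  have htotal : ∫ x in D, deriv (y x) t₀ ^ 2 ≤
      N * ((∫ x in D, f x ^ 2) + ∫ t in Ioo 0 T, B t) := by
    refine hlhs.trans ?_
    rw [hN, mul_assoc]
    refine mul_le_mul_of_nonneg_left (key.trans ?_) (Real.exp_pos _).le
    have := mul_le_mul_of_nonneg_left hBQ hM.le
    nlinarith [mul_nonneg hM.le hf0, mul_nonneg (sq_nonneg k₀) hI0,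
      mul_nonneg (mul_nonneg hT.le (sq_nonneg k)) hI0]
  calc √(∫ x in D, deriv (y x) t₀ ^ 2)
      ≤ √(N * ((∫ x in D, f x ^ 2) + ∫ t in Ioo 0 T, B t)) := Real.sqrt_le_sqrt htotal
    _ = √N * √((∫ x in D, f x ^ 2) + ∫ t in Ioo 0 T, B t) := Real.sqrt_mul hN0.le _
    _ ≤ √N * (√(∫ x in D, f x ^ 2) + √(∫ t in Ioo 0 T, B t)) :=
      mul_le_mul_of_nonneg_left (sqrt_add_le_add_sqrt hf0 hI0) (Real.sqrt_nonneg _)
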